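/- arXiv:math/0002064 — 4 statements merged into one kernel-verified Lean document; each statement's English description precedes it below -/
import Mathlib

section
/- Let V be a commutative ring and m ⊆ V an ideal satisfying m·m = m, and suppose that the V-module m ⊗_V m is flat. Then for every integer k > 1 the ideal m is generated by the set {x^k : x ∈ m} of k-th powers of its elements. -/
namespace FlatPow

open scoped Pointwise

/-- Sum of an invariant function under a map of prime order. -/
lemma sum_orbits {α M : Type*} [DecidableEq α] [AddCommMonoid M] {p : ℕ} (hp : p.Prime)
    (σ : α → α) (hσ : ∀ a, σ^[p] a = a) (f : α → M) (hf : ∀ a, f (σ a) = f a) (s : Finset α) :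
    (∀ a ∈ s, σ a ∈ s) →
      ∃ r : M, ∑ a ∈ s, f a = ∑ a ∈ s.filter (fun a => σ a = a), f a + p • r := by
  induction s using Finset.strongInduction with
  | H s ih =>
  intro hs
  by_cases hall : ∀ a ∈ s, σ a = a
  · refine ⟨0, ?_⟩
    rw [Finset.filter_true_of_mem hall]; simp
  push Not at hall
  obtain ⟨a, has, hane⟩ := hall
  have : Fact p.Prime := ⟨hp⟩
  have hmin : Function.minimalPeriod σ a = p :=
    Function.minimalPeriod_eq_prime (hσ a) hane
  have hmem : ∀ i, σ^[i] a ∈ s := by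
    intro i
    induction i with
    | zero => exact has
    | succ i ihi => rw [Function.iterate_succ_apply']; exact hs _ ihi
  set O : Finset α := (Finset.range p).image (fun i => σ^[i] a) with hO
  have hinj : Set.InjOn (fun i => σ^[i] a) (Finset.range p : Set ℕ) := by
    have := Function.iterate_injOn_Iio_minimalPeriod (f := σ) (x := a)
    rw [hmin] at this
    simpa using this
  have hOs : O ⊆ s := by
    intro b hb
    obtain ⟨i, -, rfl⟩ := Finset.mem_image.1 hb
    exact hmem i
  have hallO : ∀ i, σ^[i] a ∈ O := by
    intro i
    refine Finset.mem_image.2 ⟨i % p, Finset.mem_range.2 (Nat.mod_lt _ hp.pos), ?_⟩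
    have := Function.iterate_mod_minimalPeriod_eq (f := σ) (x := a) (n := i)
    rw [hmin] at this
    exact this
  have haO : a ∈ O := hallO 0
  have hfi : ∀ i, f (σ^[i] a) = f a := by
    intro i
    induction i with
    | zero => rfl
    | succ i ihi => rw [Function.iterate_succ_apply', hf, ihi]
  have hsumO : ∑ b ∈ O, f b = p • f a := by
    rw [hO, Finset.sum_image hinj]
    simp [hfi]
  have hback : ∀ b, σ b ∈ O → b ∈ O := by
    intro b hb
    obtain ⟨i, -, hi⟩ := Finset.mem_image.1 hb
    have h1 : σ^[p - 1] (σ b) = b := by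
      rw [← Function.iterate_succ_apply, Nat.succ_eq_add_one, Nat.sub_add_cancel hp.one_le, hσ]
    rw [← h1, ← hi]
    rw [← Function.iterate_add_apply]
    exact hallO _
  have hfix : ∀ b ∈ O, σ b ≠ b := by
    intro b hb hbb
    obtain ⟨i, hi, rfl⟩ := Finset.mem_image.1 hb
    have hi := Finset.mem_range.1 hi
    apply hane
    have h2 : ∀ j, σ^[j] (σ^[i] a) = σ^[i] a := fun j => Function.iterate_fixed hbb j
    have h3 := h2 (p - i)
    rw [← Function.iterate_add_apply, Nat.sub_add_cancel hi.le, hσ] at h3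
    rw [← h3] at hbb
    exact hbb
  obtain ⟨r, hr⟩ := ih (s \ O) (Finset.sdiff_ssubset hOs ⟨a, haO⟩) (by
    intro b hb
    rw [Finset.mem_sdiff] at hb ⊢
    exact ⟨hs _ hb.1, fun h => hb.2 (hback _ h)⟩)
  refine ⟨r + f a, ?_⟩
  have hfil : (s \ O).filter (fun a => σ a = a) = s.filter (fun a => σ a = a) := by
    ext b
    simp only [Finset.mem_filter, Finset.mem_sdiff]
    exact ⟨fun h => ⟨h.1.1, h.2⟩, fun h => ⟨⟨h.1, fun hb => hfix b hb h.2⟩, h.2⟩⟩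
  rw [← Finset.sum_sdiff hOs, hr, hsumO, hfil, smul_add, add_assoc]

lemma flat_coords {V F : Type*} [CommRing V] [AddCommGroup F] [Module V F] [Module.Flat V F]
    (φ : F →ₗ[V] V) (hφ : ∀ x y, φ x • y = φ y • x) {ι : Type*} [Fintype ι] (z : ι → F) :
    ∃ (n : ℕ) (e : Fin n → F) (c : ι → Fin n → V), (∀ a, z a = ∑ i, c a i • e i) ∧
      ∀ a b i, φ (z a) * c b i = φ (z b) * c a i := by
  classical
  let g : (ι × ι →₀ V) →ₗ[V] (ι →₀ V) := Finsupp.linearCombination V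
    (fun ab : ι × ι => Finsupp.single ab.2 (φ (z ab.1)) - Finsupp.single ab.1 (φ (z ab.2)))
  have h0 : (Finsupp.linearCombination V z) ∘ₗ g = 0 := by
    ext ab
    simp [g, hφ (z ab.1) (z ab.2)]
  obtain ⟨n, a, y, hxy, ha⟩ := Module.Flat.exists_factorization_of_comp_eq_zero_of_free h0
  refine ⟨n, fun i => y (Finsupp.single i 1), fun b i => a (Finsupp.single b 1) i, ?_, ?_⟩
  · intro b
    have h1 : z b = y (a (Finsupp.single b 1)) := by
      have := LinearMap.congr_fun hxy (Finsupp.single b 1)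
      simpa using this
    conv_lhs => rw [h1, ← Finsupp.univ_sum_single (a (Finsupp.single b 1))]
    rw [map_sum]
    refine Finset.sum_congr rfl fun i _ => ?_
    rw [← map_smul, Finsupp.smul_single, smul_eq_mul, mul_one]
  · intro b d i
    have h1 := LinearMap.congr_fun ha (Finsupp.single (b, d) 1)
    have h2 : ∀ (b : ι) (v : V), a (Finsupp.single b v) = v • a (Finsupp.single b 1) := by
      intro b v
      rw [← map_smul, Finsupp.smul_single, smul_eq_mul, mul_one]
    simp only [g, LinearMap.comp_apply, Finsupp.linearCombination_single, one_smul, map_sub,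
      LinearMap.zero_apply] at h1
    rw [h2, h2 b, sub_eq_zero] at h1
    have h3 := DFunLike.congr_fun h1 i
    simpa using h3

/-- The ideal of `k`-th powers. -/
abbrev J {V : Type*} [CommRing V] (m : Ideal V) (k : ℕ) : Ideal V :=
  Ideal.span ((fun x => x ^ k) '' (m : Set V))

lemma pow_mem_J {V : Type*} [CommRing V] {m : Ideal V} (k : ℕ) {x : V} (hx : x ∈ m) :
    x ^ k ∈ J m k := Ideal.subset_span ⟨x, hx, rfl⟩

lemma J_le {V : Type*} [CommRing V] (m : Ideal V) {k : ℕ} (hk : 0 < k) : J m k ≤ m := by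
  rw [Ideal.span_le]
  rintro _ ⟨x, hx, rfl⟩
  exact Ideal.pow_mem_of_mem m hx k hk

lemma core {V F : Type*} [CommRing V] [AddCommGroup F] [Module V F] [Module.Flat V F]
    (m : Ideal V) (hm : m * m = m)
    (φ : F →ₗ[V] V) (hφ : ∀ x y, φ x • y = φ y • x) (hr : LinearMap.range φ = m)
    {p : ℕ} (hp : p.Prime) : m ≤ J m p ⊔ Ideal.span {(p : V)} * m := by
  classical
  have : Fact p.Prime := ⟨hp⟩
  have hφm : ∀ x, φ x ∈ m := fun x => hr ▸ LinearMap.mem_range_self φ x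
  have hpow : ∀ n, m ^ (n + 1) = m := by
    intro n
    induction n with
    | zero => simp
    | succ n ih => rw [pow_succ, ih, hm]
  have key : ∀ x y : ZMod p → F, (∏ a, φ (x a)) * (∏ a, φ (y a)) ∈
      J m p ⊔ Ideal.span {(p : V)} * m := by
    intro x y
    obtain ⟨n, e, c, hc, hrel⟩ := flat_coords φ hφ (Sum.elim x y)
    have hrel' : ∀ a b i, φ (x a) * c (Sum.inr b) i = φ (y b) * c (Sum.inl a) i :=
      fun a b i => hrel (Sum.inl a) (Sum.inr b) i
    have hy : ∀ b, φ (y b) = ∑ i, c (Sum.inr b) i * φ (e i) := by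
      intro b
      have := congrArg φ (hc (Sum.inr b))
      simpa using this
    let G : (ZMod p → Fin n) → V := fun i => (∏ a, φ (x a)) * ∏ a, c (Sum.inr a) (i a)
    have hG : ∀ i, G (fun a => i (a + 1)) = G i := by
      intro i
      have e1 : G (fun a => i (a + 1)) = ∏ a, (φ (y a) * c (Sum.inl a) (i (a + 1))) := by
        simp only [G]
        rw [← Finset.prod_mul_distrib]
        exact Finset.prod_congr rfl fun a _ => hrel' a a _
      have e2 : G i = ∏ a, (φ (y (a + 1)) * c (Sum.inl a) (i (a + 1))) := by
        simp only [G]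
        rw [← Equiv.prod_comp (Equiv.addRight (1 : ZMod p)) (fun a => c (Sum.inr a) (i a)),
          ← Finset.prod_mul_distrib]
        exact Finset.prod_congr rfl fun a _ => hrel' a (a + 1) _
      rw [e1, e2, Finset.prod_mul_distrib, Finset.prod_mul_distrib]
      congr 1
      exact (Equiv.prod_comp (Equiv.addRight (1 : ZMod p)) (fun a => φ (y a))).symm
    let f : (ZMod p → Fin n) → m := fun i => ⟨G i * ∏ a, φ (e (i a)), by
      apply Ideal.mul_mem_left
      rw [← Finset.mul_prod_erase _ _ (Finset.mem_univ (0 : ZMod p))]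
      exact Ideal.mul_mem_right _ _ (hφm _)⟩
    let σ : (ZMod p → Fin n) → (ZMod p → Fin n) := fun i a => i (a + 1)
    have hσ : ∀ i, σ^[p] i = i := by
      have : ∀ (j : ℕ) i, σ^[j] i = fun a => i (a + j) := by
        intro j
        induction j with
        | zero => intro i; simp
        | succ j ih =>
          intro i
          rw [Function.iterate_succ_apply', ih]
          funext a
          simp only [σ, Nat.cast_succ]
          congr 1; ring
      intro i
      rw [this]
      simp
    have hf : ∀ i, f (σ i) = f i := by
      intro i
      apply Subtype.ext
      simp only [f, σ]
      rw [hG]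
      congr 1
      exact Equiv.prod_comp (Equiv.addRight (1 : ZMod p)) (fun a => φ (e (i a)))
    obtain ⟨r, hr⟩ := sum_orbits hp σ hσ f hf Finset.univ (fun _ _ => Finset.mem_univ _)
    have hr' := congrArg (Subtype.val) hr
    have hsum : (∏ a, φ (x a)) * (∏ a, φ (y a)) = ((∑ i, f i : m) : V) := by
      simp only [hy]
      rw [Finset.prod_univ_sum, Finset.mul_sum, AddSubmonoidClass.coe_finsetSum]
      rw [Fintype.piFinset_univ]
      refine Finset.sum_congr rfl fun i _ => ?_
      simp only [f, G]
      rw [Finset.prod_mul_distrib, mul_assoc]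
    rw [hsum, hr', Submodule.coe_add]
    refine Submodule.add_mem_sup ?_ ?_
    · rw [AddSubmonoidClass.coe_finsetSum]
      refine Ideal.sum_mem _ fun i hi => ?_
      have hi := (Finset.mem_filter.1 hi).2
      have hconst : ∀ j : ℕ, i (j : ZMod p) = i 0 := by
        intro j
        induction j with
        | zero => simp
        | succ j ih => rw [← ih, Nat.cast_succ]; exact congrFun hi (j : ZMod p)
      have hconst' : ∀ a, i a = i 0 := by
        intro a
        rw [← ZMod.natCast_zmod_val a]
        exact hconst _
      simp only [f]
      apply Ideal.mul_mem_left
      simp only [hconst']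
      rw [Finset.prod_const, Finset.card_univ, ZMod.card]
      exact pow_mem_J p (hφm _)
    · have : ((p • r : m) : V) = (p : V) * r := by simp
      rw [this]
      exact Ideal.mul_mem_mul (Ideal.mem_span_singleton_self _) r.2
  have hprod : m = Ideal.span (∏ _a : ZMod p ⊕ ZMod p, (m : Set V)) := by
    rw [← Ideal.prod_span]
    simp only [Ideal.span_eq, Finset.prod_const, Finset.card_univ, Fintype.card_sum, ZMod.card]
    obtain ⟨q, hq⟩ : ∃ q, p + p = q + 1 := ⟨p + p - 1, by have := hp.pos; omega⟩
    rw [hq, hpow]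
  conv_lhs => rw [hprod]
  rw [Ideal.span_le]
  intro w hw
  obtain ⟨g, hg, rfl⟩ := (Set.mem_fintype_prod _ _).1 hw
  have hg' : ∀ a, ∃ t, φ t = g a := by
    intro a
    have : g a ∈ LinearMap.range φ := by rw [hr]; exact hg a
    exact this
  choose t ht using hg'
  rw [Fintype.prod_sum_type]
  simp only [← ht]
  exact key _ _

lemma frob {V : Type*} [CommRing V] {m : Ideal V} {p q : ℕ} (hp : p.Prime) (hq : 0 < q)
    (h1 : m ≤ J m p ⊔ Ideal.span {(p : V)} * m) (h2 : m ≤ J m q ⊔ Ideal.span {(p : V)} * m) :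
    m ≤ J m (q * p) ⊔ Ideal.span {(p : V)} * m := by
  set K := J m (q * p) ⊔ Ideal.span {(p : V)} * m with hK
  have hpK : ∀ z ∈ m, (p : V) * z ∈ K := fun z hz =>
    (le_sup_right : _ ≤ K) (Ideal.mul_mem_mul (Ideal.mem_span_singleton_self _) hz)
  have hadd : ∀ x y, x ∈ m → x ^ p ∈ K → y ^ p ∈ K → (x + y) ^ p ∈ K := by
    intro x y hx h h'
    obtain ⟨r, hr⟩ := exists_add_pow_prime_eq hp x y
    rw [hr]
    refine K.add_mem (K.add_mem h h') ?_
    have : (p : V) * x * y * r = p * (x * (y * r)) := by ring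
    rw [this]
    exact hpK _ (m.mul_mem_right _ hx)
  have hJ : ∀ w ∈ J m q, w ^ p ∈ K := by
    intro w hw
    have : w ∈ m ∧ w ^ p ∈ K := by
      induction hw using Submodule.span_induction with
      | mem x hx =>
        obtain ⟨y, hy, rfl⟩ := hx
        refine ⟨Ideal.pow_mem_of_mem m hy q hq, ?_⟩
        simp only
        rw [← pow_mul]
        exact (le_sup_left : _ ≤ K) (pow_mem_J _ hy)
      | zero => exact ⟨m.zero_mem, by rw [zero_pow hp.ne_zero]; exact K.zero_mem⟩
      | add x y _ _ hx hy => exact ⟨m.add_mem hx.1 hy.1, hadd _ _ hx.1 hx.2 hy.2⟩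
      | smul a x _ hx =>
        refine ⟨m.mul_mem_left _ hx.1, ?_⟩
        rw [smul_eq_mul, mul_pow]
        exact K.mul_mem_left _ hx.2
    exact this.2
  have hpw : ∀ y ∈ m, y ^ p ∈ K := by
    intro y hy
    obtain ⟨w, hw, z, hz, rfl⟩ := Submodule.mem_sup.1 (h2 hy)
    refine hadd _ _ (J_le m hq hw) (hJ w hw) ?_
    exact Ideal.pow_mem_of_mem K ((le_sup_right : _ ≤ K) hz) p hp.pos
  refine h1.trans (sup_le ?_ le_sup_right)
  rw [Ideal.span_le]
  rintro _ ⟨y, hy, rfl⟩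
  exact hpw y hy

lemma polar {V : Type*} [CommRing V] {m : Ideal V} (hm : m * m = m) (k : ℕ) :
    ∃ N : ℤ, N ≠ 0 ∧ ∀ x ∈ m, (N : V) * x ∈ J m (k + 1) := by
  induction k with
  | zero => exact ⟨1, one_ne_zero, fun x hx => by simpa using pow_mem_J 1 hx⟩
  | succ k ih =>
    obtain ⟨N, hN, h⟩ := ih
    set k' := k + 1
    let M : Matrix (Fin (k' + 2)) (Fin (k' + 2)) ℤ := Matrix.vandermonde fun i => ((i : ℕ) : ℤ)
    have hD : M.det ≠ 0 := by
      rw [Matrix.det_vandermonde_ne_zero_iff]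
      intro i j hij
      exact Fin.ext (Int.ofNat_inj.1 hij)
    have h1 : ∀ x ∈ m, ∀ y ∈ m, ((M.det * (k' + 1) : ℤ) : V) * (x ^ k' * y) ∈ J m (k' + 1) := by
      intro x hx y hy
      let c : Fin (k' + 2) → V := fun j =>
        y ^ (j : ℕ) * x ^ (k' + 1 - (j : ℕ)) * ((k' + 1).choose j : ℕ)
      let MV : Matrix (Fin (k' + 2)) (Fin (k' + 2)) V := M.map (Int.castRingHom V)
      have hdet : MV.det = ((M.det : ℤ) : V) := by
        simp only [MV]
        exact (RingHom.map_det (Int.castRingHom V) M).symm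
      have hMc : ∀ t, MV.mulVec c t ∈ J m (k' + 1) := by
        intro t
        have : MV.mulVec c t = (((t : ℕ) : V) * y + x) ^ (k' + 1) := by
          rw [add_pow, Finset.sum_range]
          simp only [Matrix.mulVec, dotProduct, MV, M, c, Matrix.map_apply,
            Matrix.vandermonde_apply]
          refine Finset.sum_congr rfl fun j _ => ?_
          simp [mul_pow]; ring
        rw [this]
        exact pow_mem_J _ (m.add_mem (m.mul_mem_left _ hy) hx)
      have hc : ∀ j, MV.det * c j ∈ J m (k' + 1) := by
        intro j
        have : MV.adjugate.mulVec (MV.mulVec c) j = MV.det * c j := by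
          rw [Matrix.mulVec_mulVec, Matrix.adjugate_mul, Matrix.smul_mulVec, Matrix.one_mulVec]
          rfl
        rw [← this]
        change ∑ t, MV.adjugate j t * MV.mulVec c t ∈ _
        exact Ideal.sum_mem _ fun t _ => Ideal.mul_mem_left _ _ (hMc t)
      have := hc ⟨1, by omega⟩
      rw [hdet] at this
      simp only [c, pow_one, Nat.add_sub_cancel, Nat.choose_one_right] at this
      convert this using 1
      push_cast
      ring
    refine ⟨M.det * (k' + 1) * N, mul_ne_zero (mul_ne_zero hD (by omega)) hN, ?_⟩
    have h2 : ∀ w ∈ J m k', ∀ y ∈ m, ((M.det * (k' + 1) : ℤ) : V) * (w * y) ∈ J m (k' + 1) := by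
      intro w hw y hy
      induction hw using Submodule.span_induction with
      | mem x hx =>
        obtain ⟨x, hx, rfl⟩ := hx
        exact h1 x hx y hy
      | zero => simp
      | add a b _ _ ha hb => rw [add_mul, mul_add]; exact Ideal.add_mem _ ha hb
      | smul a x _ hx =>
        have := Ideal.mul_mem_left _ a hx
        convert this using 1
        rw [smul_eq_mul]; ring
    intro x hx
    rw [← hm] at hx
    induction hx using Submodule.mul_induction_on' with
    | mem_mul_mem a ha b hb =>
      have := h2 _ (h a ha) b hb
      convert this using 1
      push_cast
      ring
    | add a _ b _ ha hb => rw [mul_add]; exact Ideal.add_mem _ ha hb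

end FlatPow

/-- Let `V` be a commutative ring and `m ⊆ V` an ideal with `m·m = m`,
and suppose the `V`-module `m ⊗_V m` is flat.  Then for every integer `k > 1` the ideal
`m` is generated by the `k`-th powers of its elements. -/
theorem span_pow_eq_self_of_flat_tensor
    {V : Type*} [CommRing V] (m : Ideal V) (hm : m * m = m)
    (hflat : Module.Flat V (TensorProduct V m m)) :
    ∀ k : ℕ, 1 < k → Ideal.span ((fun x => x ^ k) '' (m : Set V)) = m := by
  intro k hk
  refine le_antisymm (FlatPow.J_le m (by omega)) ?_
  change m ≤ FlatPow.J m k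
  let φ : TensorProduct V m m →ₗ[V] V :=
    TensorProduct.lift ((LinearMap.mul V V).compl₁₂ m.subtype m.subtype)
  have hφt : ∀ a b : m, φ (a ⊗ₜ[V] b) = (a : V) * b := fun a b => rfl
  have hφ : ∀ x y, φ x • y = φ y • x := by
    intro x y
    induction x using TensorProduct.induction_on with
    | zero => simp
    | add x x' hx hx' => rw [map_add, add_smul, smul_add, hx, hx']
    | tmul a b =>
      induction y using TensorProduct.induction_on with
      | zero => simp
      | add y y' hy hy' => rw [map_add, add_smul, smul_add, hy, hy']
      | tmul c d =>
        rw [hφt, hφt]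
        have e1 : ((a : V) * b) • (c ⊗ₜ[V] d) = (((b : V) * c) • a) ⊗ₜ[V] d := by
          rw [TensorProduct.smul_tmul']
          congr 1
          apply Subtype.ext
          simp; ring
        rw [e1, TensorProduct.smul_tmul, ← TensorProduct.tmul_smul]
        congr 1
        apply Subtype.ext
        simp; ring
  have hr : LinearMap.range φ = m := by
    apply le_antisymm
    · rintro _ ⟨x, rfl⟩
      induction x using TensorProduct.induction_on with
      | zero => simp
      | add x x' hx hx' => rw [map_add]; exact m.add_mem hx hx'
      | tmul a b => rw [hφt]; exact m.mul_mem_left _ b.2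
    · conv_lhs => rw [← hm]
      rw [Ideal.mul_le]
      intro a ha b hb
      exact ⟨(⟨a, ha⟩ : m) ⊗ₜ[V] (⟨b, hb⟩ : m), rfl⟩
  have hprime : ∀ p : ℕ, p.Prime → m ≤ FlatPow.J m k ⊔ Ideal.span {(p : V)} * m := by
    intro p hp
    have h1 := FlatPow.core m hm φ hφ hr hp
    have hq : ∀ n : ℕ, m ≤ FlatPow.J m (p ^ (n + 1)) ⊔ Ideal.span {(p : V)} * m := by
      intro n
      induction n with
      | zero => simpa using h1
      | succ n ih => rw [pow_succ]; exact FlatPow.frob hp (pow_pos hp.pos _) h1 ih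
    refine (hq k).trans (sup_le_sup_right ?_ _)
    rw [Ideal.span_le]
    rintro _ ⟨x, hx, rfl⟩
    have hle : k ≤ p ^ (k + 1) :=
      (Nat.lt_pow_self hp.one_lt).le.trans (Nat.pow_le_pow_right hp.pos (Nat.le_succ k))
    simp only
    rw [← Nat.sub_add_cancel hle, pow_add]
    exact Ideal.mul_mem_left _ _ (FlatPow.pow_mem_J k hx)
  have hall : ∀ N : ℕ, N ≠ 0 → m ≤ FlatPow.J m k ⊔ Ideal.span {(N : V)} * m := by
    intro N
    induction N using induction_on_primes with
    | zero => intro h; exact absurd rfl h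
    | one => intro _; simp
    | prime_mul p a hp ih =>
      intro hpa
      have ha : a ≠ 0 := by rintro rfl; simp at hpa
      refine (hprime p hp).trans (sup_le le_sup_left ?_)
      refine (Ideal.mul_mono_right (ih ha)).trans ?_
      rw [Ideal.mul_sup]
      refine sup_le_sup Ideal.mul_le_right ?_
      rw [← mul_assoc, Ideal.span_singleton_mul_span_singleton, Nat.cast_mul]
  obtain ⟨N, hN, h⟩ := FlatPow.polar hm (k - 1)
  rw [Nat.sub_add_cancel hk.le] at h
  refine (hall N.natAbs (Int.natAbs_ne_zero.2 hN)).trans (sup_le le_rfl ?_)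
  rw [Ideal.span_singleton_mul_le_iff]
  intro x hx
  have hx' := h x hx
  rcases Int.natAbs_eq N with h' | h'
  · rw [h'] at hx'
    simpa using hx'
  · rw [h'] at hx'
    simpa using hx'
end

section
/- Let V be a commutative ring and m ⊆ V an ideal satisfying m·m = m, and suppose m is countably generated as a V-module. Then: (i) the V-module m̃ = m ⊗_V m is countably presented, i.e. there is an exact sequence F₁ → F₀ → m̃ → 0 of V-modules with F₀ and F₁ free of countable rank; (ii) if moreover m̃ is a flat V-module, then m̃ has projective dimension at most 1, i.e. there is a short exact sequence 0 → P₁ → P₀ → m̃ → 0 of V-modules with P₀ and P₁ projective. -/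
universe u

open TensorProduct

section PartOne

variable {V : Type u} [CommRing V]

/-- The multiplication map `m ⊗ m → V`. -/
noncomputable def mulT (m : Ideal V) : TensorProduct V m m →ₗ[V] V :=
  TensorProduct.lift ((LinearMap.mul V V).compl₁₂ m.subtype m.subtype)

theorem mulT_tmul (m : Ideal V) (a b : m) : mulT m (a ⊗ₜ b) = (a : V) * b := by
  simp [mulT]

theorem smul_eq_tmul (m : Ideal V) (a : m) (z : TensorProduct V m m) (b : m)
    (h : mulT m z = b) : (a : V) • z = a ⊗ₜ[V] b := by
  have key : ∀ z : TensorProduct V m m, ∃ b : m, mulT m z = b ∧ (a : V) • z = a ⊗ₜ[V] b := by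
    intro z
    induction z using TensorProduct.induction_on with
    | zero => exact ⟨0, by simp, by simp⟩
    | tmul c d =>
      refine ⟨(c : V) • d, by simp [mulT_tmul], ?_⟩
      rw [TensorProduct.tmul_smul, TensorProduct.smul_tmul', TensorProduct.smul_tmul']
      congr 1
      ext
      simp [mul_comm]
    | add x y hx hy =>
      obtain ⟨b, hb, hb'⟩ := hx
      obtain ⟨c, hc, hc'⟩ := hy
      exact ⟨b + c, by simp [hb, hc], by rw [smul_add, hb', hc', TensorProduct.tmul_add]⟩
  obtain ⟨b', h1, h2⟩ := key z
  have : b' = b := Subtype.ext (h1.symm.trans h)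
  rw [h2, this]

theorem mulT_surj (m : Ideal V) (hm : m * m = m) (b : m) : ∃ z, mulT m z = b := by
  have hb : (b : V) ∈ m * m := by rw [hm]; exact b.2
  have : m * m ≤ LinearMap.range (mulT m) := by
    rw [Ideal.mul_le]
    intro r hr s hs
    exact ⟨(⟨r, hr⟩ : m) ⊗ₜ ⟨s, hs⟩, by simp [mulT_tmul]⟩
  exact this hb

theorem tmul_swap (m : Ideal V) (hm : m * m = m) (a b : m) :
    a ⊗ₜ[V] b = b ⊗ₜ[V] a := by
  have key : ∀ z : TensorProduct V m m, ∀ b : m, mulT m z = b → b ⊗ₜ[V] a = a ⊗ₜ[V] b := by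
    intro z
    induction z using TensorProduct.induction_on with
    | zero =>
      intro b hb
      have : b = 0 := Subtype.ext (by simpa using hb.symm)
      simp [this]
    | tmul c d =>
      intro b hb
      have hbc : b = (c : V) • d := Subtype.ext (by simpa [mulT_tmul] using hb.symm)
      rw [hbc, TensorProduct.tmul_smul, ← TensorProduct.smul_tmul']
      rw [smul_eq_tmul m c (d ⊗ₜ a) ((d : V) • a) (by simp [mulT_tmul]),
        smul_eq_tmul m c (a ⊗ₜ d) ((d : V) • a) (by simp [mulT_tmul, mul_comm])]
    | add x y hx hy =>
      intro b hb
      have hx' : mulT m x ∈ m := by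
        clear hb hx hy
        induction x using TensorProduct.induction_on with
        | zero => simp
        | tmul c d => rw [mulT_tmul]; exact m.mul_mem_left _ d.2
        | add x y hx hy => rw [map_add]; exact m.add_mem hx hy
      have hy' : mulT m y ∈ m := by
        have : mulT m y = b - mulT m x := by rw [← hb, map_add]; ring
        rw [this]; exact m.sub_mem b.2 hx'
      have e : b = ⟨_, hx'⟩ + ⟨_, hy'⟩ := Subtype.ext (by simpa using hb.symm)
      rw [e, TensorProduct.add_tmul, TensorProduct.tmul_add, hx ⟨_, hx'⟩ rfl, hy ⟨_, hy'⟩ rfl]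
  obtain ⟨z, hz⟩ := mulT_surj m hm b
  exact (key z b hz).symm

theorem part_one (m : Ideal V) (hm : m * m = m)
    (g : ℕ → V) (hgen : m = Ideal.span (Set.range g)) :
    ∃ (d : (ℕ →₀ V) →ₗ[V] (ℕ →₀ V))
        (e : (ℕ →₀ V) →ₗ[V] TensorProduct V m m),
        Function.Surjective e ∧ LinearMap.ker e = LinearMap.range d := by
  have hg : ∀ i, g i ∈ m := fun i => by rw [hgen]; exact Ideal.subset_span ⟨i, rfl⟩
  let p : (ℕ →₀ V) →ₗ[V] m := Finsupp.linearCombination V (fun i => (⟨g i, hg i⟩ : m))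
  have hp1 : ∀ i, p (Finsupp.single i 1) = ⟨g i, hg i⟩ := fun i => by simp [p]
  have hpc : ∀ y, (p y : V) = Finsupp.linearCombination V g y := fun y => by
    have : m.subtype ∘ₗ p = Finsupp.linearCombination V g := by
      ext i; simp [p]
    exact LinearMap.congr_fun this y
  have hp : Function.Surjective p := by
    intro b
    have hb : (b : V) ∈ Submodule.span V (Set.range g) := by
      exact hgen.le b.2
    rw [Finsupp.mem_span_range_iff_exists_finsupp] at hb
    obtain ⟨c, hc⟩ := hb
    refine ⟨c, Subtype.ext ?_⟩
    rw [hpc]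
    exact hc
  choose t ht using fun i => mulT_surj m hm ⟨g i, hg i⟩
  choose w hw using fun i => LinearMap.lTensor_surjective m hp (t i)
  let ν : TensorProduct V m (ℕ →₀ V) →ₗ[V] (ℕ →₀ V) :=
    TensorProduct.lift ((LinearMap.lsmul V (ℕ →₀ V)).comp m.subtype)
  have hν : ∀ (a : m) y, ν (a ⊗ₜ y) = (a : V) • y := fun a y => by simp [ν]
  let e : (ℕ →₀ V) →ₗ[V] TensorProduct V m m := Finsupp.linearCombination V t
  have he1 : ∀ i, e (Finsupp.single i 1) = t i := fun i => by simp [e]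
  have hA : ∀ (a : m) y, (a : V) • e y = a ⊗ₜ[V] p y := by
    intro a y
    apply smul_eq_tmul
    have : mulT m ∘ₗ e = m.subtype ∘ₗ p := by
      ext i; simp [p, e, ht]
    exact LinearMap.congr_fun this y
  have hC : e ∘ₗ ν = LinearMap.lTensor m p := by
    apply TensorProduct.ext'
    intro a y
    simp only [LinearMap.comp_apply, hν, map_smul, hA, LinearMap.lTensor_tmul]
  let r : ℕ ⊕ (ℕ × ℕ) → (ℕ →₀ V) := Sum.elim
    (fun i => Finsupp.single i 1 - ν (w i))
    (fun kj => g kj.1 • Finsupp.single kj.2 1 - g kj.2 • Finsupp.single kj.1 1)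
  let K : Submodule V (ℕ →₀ V) := Submodule.span V (Set.range r)
  have hr1 : ∀ i, Finsupp.single i 1 - ν (w i) ∈ K :=
    fun i => Submodule.subset_span ⟨Sum.inl i, rfl⟩
  have hr2 : ∀ k j, g k • Finsupp.single j 1 - g j • Finsupp.single k 1 ∈ K :=
    fun k j => Submodule.subset_span ⟨Sum.inr (k, j), rfl⟩
  have hKe : K ≤ LinearMap.ker e := by
    refine Submodule.span_le.2 ?_
    rintro _ ⟨i | ⟨k, j⟩, rfl⟩
    · have := LinearMap.congr_fun hC (w i)
      simp only [LinearMap.comp_apply, hw] at this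
      simp [r, this, he1]
    · have h1 := hA ⟨g k, hg k⟩ (Finsupp.single j 1)
      have h2 := hA ⟨g j, hg j⟩ (Finsupp.single k 1)
      rw [hp1] at h1 h2
      simp only [r, Sum.elim_inr, SetLike.mem_coe, LinearMap.mem_ker, map_sub, map_smul]
      rw [h1, h2, tmul_swap m hm, sub_self]
  have hkos : ∀ (a : m) y, p y = 0 → (a : V) • y ∈ K := by
    intro a y hy
    have h1 : ∀ k y, g k • y - (p y : V) • Finsupp.single k 1 ∈ K := by
      intro k y
      induction y using Finsupp.induction_linear with
      | zero => simp
      | add x y hx hy =>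
        have := K.add_mem hx hy
        convert this using 1
        rw [map_add, Submodule.coe_add, add_smul, smul_add]
        abel
      | single j c =>
        have := K.smul_mem c (hr2 k j)
        convert this using 1
        rw [hpc, smul_sub, smul_smul, smul_smul]
        simp [mul_comm]
    have h2 : m ≤ K.comap (LinearMap.toSpanSingleton V _ y) := by
      conv_lhs => rw [hgen]
      refine Ideal.span_le.2 ?_
      rintro _ ⟨k, rfl⟩
      have := h1 k y
      rw [hy] at this
      simpa using this
    simpa using h2 a.2
  choose σ hσ using hp
  have hσK : ∀ (a : m) (x y : ℕ →₀ V), p x = p y →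
      (a : V) • K.mkQ x = (a : V) • K.mkQ y := by
    intro a x y h
    rw [← sub_eq_zero, ← smul_sub, ← map_sub, ← map_smul, Submodule.mkQ_apply,
      Submodule.Quotient.mk_eq_zero]
    exact hkos a _ (by rw [map_sub, h, sub_self])
  let s : TensorProduct V m m →ₗ[V] ((ℕ →₀ V) ⧸ K) := TensorProduct.lift
    (LinearMap.mk₂ V (fun (a b : m) => (a : V) • K.mkQ (σ b))
      (fun a a' b => by simp [add_smul])
      (fun c a b => by simp [mul_smul])
      (fun a b b' => by
        rw [← smul_add, ← map_add]
        exact hσK a _ _ (by simp [hσ]))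
      (fun c a b => by
        rw [smul_comm c, ← map_smul]
        exact hσK a _ _ (by simp [hσ])))
  have hs : s ∘ₗ LinearMap.lTensor m p = K.mkQ ∘ₗ ν := by
    apply TensorProduct.ext'
    intro a y
    simp only [LinearMap.comp_apply, LinearMap.lTensor_tmul, s, TensorProduct.lift.tmul,
      hν, map_smul]
    exact hσK a _ _ (hσ _)
  have hse : s ∘ₗ e = K.mkQ := by
    apply Finsupp.lhom_ext'
    intro i
    apply LinearMap.ext_ring
    simp only [LinearMap.comp_apply, Finsupp.lsingle_apply]
    rw [he1, ← hw, ← LinearMap.comp_apply, hs, LinearMap.comp_apply, eq_comm, ← sub_eq_zero,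
      ← map_sub, Submodule.mkQ_apply, Submodule.Quotient.mk_eq_zero]
    exact hr1 i
  have hker : LinearMap.ker e = K := by
    refine le_antisymm ?_ hKe
    intro y hy
    have := LinearMap.congr_fun hse y
    rw [LinearMap.comp_apply, LinearMap.mem_ker.1 hy, map_zero, Submodule.mkQ_apply, eq_comm,
      Submodule.Quotient.mk_eq_zero] at this
    exact this
  obtain ⟨E⟩ : Nonempty (ℕ ≃ ℕ ⊕ (ℕ × ℕ)) := nonempty_equiv_of_countable
  refine ⟨Finsupp.linearCombination V (r ∘ E), e, ?_, ?_⟩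
  · have hsurj : Function.Surjective (e ∘ₗ ν) := by
      rw [hC]
      exact LinearMap.lTensor_surjective m (fun b => ⟨σ b, hσ b⟩)
    intro z
    obtain ⟨y, hy⟩ := hsurj z
    exact ⟨ν y, hy⟩
  · rw [hker, Finsupp.range_linearCombination, E.surjective.range_comp]

end PartOne

section PartTwo

variable {V : Type u} [CommRing V] {M : Type u} [AddCommGroup M] [Module V M]

theorem exists_trunc (S : Submodule V (ℕ →₀ V)) (hS : S.FG) :
    ∃ (N : ℕ) (ρ : (ℕ →₀ V) →ₗ[V] (Fin N → V)) (j : (Fin N → V) →ₗ[V] (ℕ →₀ V)),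
      Function.Surjective ρ ∧ ∀ x ∈ S, j (ρ x) = x := by
  classical
  obtain ⟨G, rfl⟩ := hS
  let N := (G.biUnion (fun x => x.support)).sup id + 1
  let ρ : (ℕ →₀ V) →ₗ[V] (Fin N → V) := LinearMap.pi (fun i => Finsupp.lapply (i : ℕ))
  let j : (Fin N → V) →ₗ[V] (ℕ →₀ V) :=
    Fintype.linearCombination V (fun i : Fin N => Finsupp.single (i : ℕ) (1 : V))
  refine ⟨N, ρ, j, ?_, ?_⟩
  · intro v
    refine ⟨j v, ?_⟩
    ext i
    simp only [j, ρ, Fintype.linearCombination_apply, LinearMap.pi_apply, Finsupp.lapply_apply,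
      Finsupp.finsetSum_apply, Finsupp.smul_apply, Finsupp.single_apply, smul_eq_mul]
    rw [Finset.sum_eq_single i]
    · simp
    · intro b _ hb
      have : (b : ℕ) ≠ i := fun h => hb (Fin.ext h)
      simp [this]
    · simp
  have : Submodule.span V (G : Set (ℕ →₀ V)) ≤ LinearMap.eqLocus (j ∘ₗ ρ) LinearMap.id := by
    refine Submodule.span_le.2 ?_
    intro x hx
    change j (ρ x) = x
    have hsup : ∀ n, x n ≠ 0 → n < N := by
      intro n hn
      refine Nat.lt_succ_of_le ?_
      exact Finset.le_sup (f := id) (Finset.mem_biUnion.2 ⟨x, hx, Finsupp.mem_support_iff.2 hn⟩)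
    ext n
    simp only [j, ρ, Fintype.linearCombination_apply, LinearMap.pi_apply, Finsupp.lapply_apply,
      Finsupp.finsetSum_apply, Finsupp.smul_apply, Finsupp.single_apply, smul_eq_mul]
    by_cases hn : n < N
    · rw [Finset.sum_eq_single ⟨n, hn⟩]
      · simp
      · intro b _ hb
        have : (b : ℕ) ≠ n := fun h => hb (Fin.ext h)
        simp [this]
      · simp
    · have h0 : x n = 0 := by
        by_contra h
        exact hn (hsup n h)
      rw [h0]
      refine Finset.sum_eq_zero ?_
      intro b _
      have : (b : ℕ) ≠ n := fun h => hn (h ▸ b.2)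
      simp [this]
  exact fun x hx => this hx

theorem exists_theta [Module.Flat V M] (e : (ℕ →₀ V) →ₗ[V] M) (he : Function.Surjective e)
    (S : Submodule V (ℕ →₀ V)) (hS : S.FG) (hSK : S ≤ LinearMap.ker e) :
    ∃ θ : (ℕ →₀ V) →ₗ[V] (ℕ →₀ V), LinearMap.range θ ≤ LinearMap.ker e ∧
      (LinearMap.range θ).FG ∧ ∀ x ∈ S, θ x = x := by
  obtain ⟨N, ρ, j, hρ, hj⟩ := exists_trunc S hS
  have : Module.Finite V S := Module.Finite.of_fg hS
  have h0 : (e ∘ₗ j) ∘ₗ (ρ ∘ₗ S.subtype) = 0 := by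
    ext x
    simp only [LinearMap.comp_apply, Submodule.subtype_apply, hj x x.2, LinearMap.zero_apply]
    exact hSK x.2
  obtain ⟨k, a, y, hya, haf⟩ := Module.Flat.exists_factorization_of_comp_eq_zero_of_free
    (K := S) (N := Fin N → V) h0
  obtain ⟨y', hy'⟩ := Module.projective_lifting_property e y he
  refine ⟨(j - y' ∘ₗ a) ∘ₗ ρ, ?_, ?_, ?_⟩
  · rintro _ ⟨x, rfl⟩
    have h1 := LinearMap.congr_fun hya (ρ x)
    have h2 := LinearMap.congr_fun hy' (a (ρ x))
    simp only [LinearMap.comp_apply] at h1 h2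
    simp [h1, h2]
  · rw [LinearMap.range_comp_of_range_eq_top _ (LinearMap.range_eq_top.2 hρ)]
    exact Module.Finite.iff_fg.1 inferInstance
  · intro x hx
    have h1 := LinearMap.congr_fun haf ⟨x, hx⟩
    simp only [LinearMap.comp_apply, Submodule.subtype_apply, LinearMap.zero_apply] at h1
    simp [h1, hj x hx]

theorem ker_projective [Module.Flat V M] (d : (ℕ →₀ V) →ₗ[V] (ℕ →₀ V))
    (e : (ℕ →₀ V) →ₗ[V] M) (he : Function.Surjective e)
    (hde : LinearMap.ker e = LinearMap.range d) : Module.Projective V (LinearMap.ker e) := by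
  classical
  let S : ℕ → Submodule V (ℕ →₀ V) := fun n =>
    Submodule.span V ((fun i => d (Finsupp.single i 1)) '' (Set.Iio n))
  have hS : ∀ n, (S n).FG := fun n => Submodule.fg_span ((Set.finite_Iio n).image _)
  have hSK : ∀ n, S n ≤ LinearMap.ker e := by
    intro n
    refine Submodule.span_le.2 ?_
    rintro _ ⟨i, _, rfl⟩
    rw [hde]
    exact ⟨_, rfl⟩
  have hmono : Monotone S := fun a b h =>
    Submodule.span_mono (Set.image_mono (Set.Iio_subset_Iio h))
  have hmem : ∀ x ∈ LinearMap.ker e, ∃ n, x ∈ S n := by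
    intro x hx
    rw [hde] at hx
    obtain ⟨y, rfl⟩ := hx
    induction y using Finsupp.induction_linear with
    | zero => exact ⟨0, by simp⟩
    | add x y hx hy =>
      obtain ⟨a, ha⟩ := hx
      obtain ⟨b, hb⟩ := hy
      refine ⟨max a b, ?_⟩
      rw [map_add]
      exact (S _).add_mem (hmono (le_max_left _ _) ha) (hmono (le_max_right _ _) hb)
    | single i c =>
      refine ⟨i + 1, ?_⟩
      have : Finsupp.single i c = c • Finsupp.single i (1 : V) := by simp
      rw [this, map_smul]
      exact (S _).smul_mem _ (Submodule.subset_span ⟨i, by simp, rfl⟩)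
  choose θ hθK hθfg hθ using fun n => exists_theta e he (S n) (hS n) (hSK n)
  choose β hβK hβfg hβ using fun n => exists_theta e he
    (LinearMap.range (θ (n + 1)) ⊔ LinearMap.range (θ n)) ((hθfg _).sup (hθfg _))
    (sup_le (hθK _) (hθK _))
  choose γ hγK hγfg hγ using fun n => exists_theta e he
    (LinearMap.range (θ n)) (hθfg _) (hθK _)
  -- differences, starting from zero
  let δ : ℕ → (ℕ →₀ V) →ₗ[V] (ℕ →₀ V) := fun n => θ (n + 1) - θ n
  have hev : ∀ x ∈ LinearMap.ker e, ∃ n, ∀ k, n ≤ k → δ k x = 0 := by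
    intro x hx
    obtain ⟨n, hn⟩ := hmem x hx
    refine ⟨n, fun k hk => ?_⟩
    simp only [δ, LinearMap.sub_apply]
    rw [hθ (k + 1) x (hmono (by omega) hn), hθ k x (hmono hk hn), sub_self]
  choose nn hnn using hev
  have hfin : ∀ x : LinearMap.ker e, (Function.support (fun n => δ n x)).Finite := by
    intro x
    refine (Set.finite_Iio (nn x x.2)).subset ?_
    intro k hk
    by_contra h
    exact hk (hnn x x.2 k (by simpa using h))
  let s : LinearMap.ker e →ₗ[V] (ℕ →₀ (ℕ →₀ V)) :=
    { toFun := fun x => Finsupp.ofSupportFinite (fun n => δ n x) (hfin x)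
      map_add' := fun x y => by ext n : 1; exact map_add (δ n) _ _
      map_smul' := fun c x => by ext n : 1; exact map_smul (δ n) _ _ }
  let q : (ℕ →₀ (ℕ →₀ V)) →ₗ[V] LinearMap.ker e :=
    Finsupp.lsum V (fun n => (β n).codRestrict (LinearMap.ker e)
      (fun x => hβK n ⟨x, rfl⟩))
  let γ' : (ℕ →₀ V) →ₗ[V] LinearMap.ker e :=
    (γ 0).codRestrict (LinearMap.ker e) (fun x => hγK 0 ⟨x, rfl⟩)
  refine Module.Projective.of_split
    (M := (ℕ →₀ (ℕ →₀ V)) × (ℕ →₀ V)) (s.prod (θ 0 ∘ₗ (LinearMap.ker e).subtype))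
    (q.coprod γ') ?_
  ext1 x
  apply Subtype.ext
  have h1 : ((q (s x) : LinearMap.ker e) : ℕ →₀ V) = (x : ℕ →₀ V) - θ 0 x := by
    obtain ⟨n, hn⟩ := hmem x x.2
    have hsub : (s x).support ⊆ Finset.range n := by
      intro k hk
      rw [Finsupp.mem_support_iff] at hk
      rw [Finset.mem_range]
      by_contra h
      apply hk
      change δ k x = 0
      simp only [δ, LinearMap.sub_apply]
      rw [hθ (k + 1) x (hmono (by omega) hn), hθ k x (hmono (by omega) hn), sub_self]
    have : q (s x) = ∑ k ∈ Finset.range n, (β k).codRestrict (LinearMap.ker e)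
      (fun x => hβK k ⟨x, rfl⟩) (δ k x) := by
      simp only [q, Finsupp.lsum_apply]
      rw [Finsupp.sum_of_support_subset _ hsub _ (by simp)]
      rfl
    rw [this, Submodule.coe_sum]
    have h2 : ∀ k ∈ Finset.range n, (((β k).codRestrict (LinearMap.ker e)
      (fun x => hβK k ⟨x, rfl⟩) (δ k x) : LinearMap.ker e) : ℕ →₀ V) =
        θ (k + 1) x - θ k x := by
      intro k _
      rw [LinearMap.codRestrict_apply]
      exact hβ k _ (Submodule.sub_mem _ (Submodule.mem_sup_left ⟨_, rfl⟩)
        (Submodule.mem_sup_right ⟨_, rfl⟩))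
    rw [Finset.sum_congr rfl h2, Finset.sum_range_sub (fun k => θ k (x : ℕ →₀ V)),
      hθ n x hn]
  have h3 : ((γ' (θ 0 x) : LinearMap.ker e) : ℕ →₀ V) = θ 0 x := hγ 0 _ ⟨_, rfl⟩
  change ((q (s x) : LinearMap.ker e) : ℕ →₀ V) + ((γ' (θ 0 x) : LinearMap.ker e) : ℕ →₀ V) = x
  rw [h1, h3, sub_add_cancel]

end PartTwo

/-- Let `V` be a commutative ring and `m ⊆ V` an ideal with `m·m = m`,
and suppose `m` is countably generated as a `V`-module.  Then:
(i) the `V`-module `m̃ = m ⊗_V m` is countably presented: there is an exact sequence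
`F₁ → F₀ → m̃ → 0` with `F₀, F₁` free of countable rank;
(ii) if moreover `m̃` is flat, then `m̃` has projective dimension at most `1`: there is a
short exact sequence `0 → P₁ → P₀ → m̃ → 0` with `P₀, P₁` projective. -/
theorem tensor_countably_presented_and_projdim_le_one
    {V : Type u} [CommRing V] (m : Ideal V) (hm : m * m = m)
    (g : ℕ → V) (hgen : m = Ideal.span (Set.range g)) :
    (∃ (d : (ℕ →₀ V) →ₗ[V] (ℕ →₀ V))
        (e : (ℕ →₀ V) →ₗ[V] TensorProduct V m m),
        Function.Surjective e ∧ LinearMap.ker e = LinearMap.range d) ∧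
      (Module.Flat V (TensorProduct V m m) →
        ∃ (P₁ P₀ : Type u) (_ : AddCommGroup P₁) (_ : AddCommGroup P₀)
          (_ : Module V P₁) (_ : Module V P₀),
          Module.Projective V P₁ ∧ Module.Projective V P₀ ∧
            ∃ (ι : P₁ →ₗ[V] P₀) (π : P₀ →ₗ[V] TensorProduct V m m),
              Function.Injective ι ∧ Function.Surjective π ∧
                LinearMap.ker π = LinearMap.range ι) := by
  obtain ⟨d, e, he, hde⟩ := part_one m hm g hgen
  refine ⟨⟨d, e, he, hde⟩, fun hflat => ?_⟩
  refine ⟨LinearMap.ker e, ℕ →₀ V, inferInstance, inferInstance, inferInstance, inferInstance,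
    ker_projective d e he hde, inferInstance, (LinearMap.ker e).subtype, e,
    Submodule.subtype_injective _, he, ?_⟩
  rw [Submodule.range_subtype]
end

section
/- Let R be a commutative ring, M an R-module, and φ : R^n → R^m an R-linear map. Let C = coker(φ), and let C' = coker(φ^∨), where φ^∨ : R^m → R^n is the dual map Hom_R(φ, R) under the identification Hom_R(R^k, R) ≅ R^k. Then there is a natural isomorphism Tor_1^R(C', M) ≅ Hom_R(C, M) / Im(Hom_R(C, R) ⊗_R M → Hom_R(C, M)), where the map Hom_R(C, R) ⊗_R M → Hom_R(C, M) sends f ⊗ x to the homomorphism c ↦ f(c)·x. -/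
universe u

open CategoryTheory

namespace TorCoker

open TensorProduct

/-- Two surjections with the same kernel have isomorphic targets. -/
lemma equiv_of_ker_eq {R : Type*} [CommRing R] {Z A B : Type*} [AddCommGroup Z] [Module R Z]
    [AddCommGroup A] [Module R A] [AddCommGroup B] [Module R B]
    (α : Z →ₗ[R] A) (β : Z →ₗ[R] B) (hα : Function.Surjective α) (hβ : Function.Surjective β)
    (h : ∀ z, α z = 0 ↔ β z = 0) : Nonempty (A ≃ₗ[R] B) := by
  have hk : LinearMap.ker α = LinearMap.ker β := by ext z; simpa using h z
  exact ⟨(α.quotKerEquivOfSurjective hα).symm ≪≫ₗ Submodule.quotEquivOfEq _ _ hk ≪≫ₗ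
    β.quotKerEquivOfSurjective hβ⟩

/-- The pairing map `R^m ⊗ M → Hom(R^m, M)`. -/
noncomputable def pair (R : Type*) [CommRing R] (k : ℕ) (M : Type*) [AddCommGroup M] [Module R M] :
    (Fin k → R) ⊗[R] M →ₗ[R] ((Fin k → R) →ₗ[R] M) :=
  TensorProduct.lift ((LinearMap.smulRightₗ : ((Fin k → R) →ₗ[R] R) →ₗ[R] M →ₗ[R] _) ∘ₗ
    (dotProductBilin R R : (Fin k → R) →ₗ[R] (Fin k → R) →ₗ[R] R))

section
variable {R : Type*} [CommRing R] {M : Type*} [AddCommGroup M] [Module R M]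

@[simp]
lemma pair_tmul (k : ℕ) (f : Fin k → R) (x : M) (v : Fin k → R) :
    pair R k M (f ⊗ₜ x) v = (f ⬝ᵥ v) • x := by
  simp [pair]

lemma pair_inv (k : ℕ) (h : (Fin k → R) →ₗ[R] M) :
    pair R k M (∑ i, Pi.single i 1 ⊗ₜ h (Pi.single i 1)) = h := by
  ext i
  simp [Pi.single_apply, Finset.sum_ite_eq]

lemma pair_inv' (k : ℕ) (t : (Fin k → R) ⊗[R] M) :
    ∑ i, (Pi.single i 1 : Fin k → R) ⊗ₜ[R] pair R k M t (Pi.single i 1) = t := by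
  induction t with
  | zero => simp
  | add x y hx hy =>
    simp only [map_add, LinearMap.add_apply, TensorProduct.tmul_add, Finset.sum_add_distrib, hx, hy]
  | tmul f x =>
    simp only [pair_tmul, dotProduct_single, mul_one, ← TensorProduct.smul_tmul,
      ← TensorProduct.sum_tmul]
    congr 1
    ext j
    simp [Pi.single_apply]

lemma pair_injective (k : ℕ) : Function.Injective (pair R k M) := fun s t h => by
  rw [← pair_inv' k s, ← pair_inv' k t, h]

lemma pair_rTensor {n m : ℕ} (φ : (Fin n → R) →ₗ[R] (Fin m → R))
    (ψ : (Fin m → R) →ₗ[R] (Fin n → R)) (hψ : ∀ f v, ψ f ⬝ᵥ v = f ⬝ᵥ φ v)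
    (t : (Fin m → R) ⊗[R] M) :
    pair R n M (ψ.rTensor M t) = pair R m M t ∘ₗ φ := by
  induction t with
  | zero => simp
  | add x y hx hy => simp only [map_add, hx, hy, LinearMap.add_comp]
  | tmul f x =>
    apply LinearMap.ext
    intro v
    simp [hψ]

end

lemma core {R : Type*} [CommRing R] {M P₀ P₁ P₂ Q : Type u} [AddCommGroup M] [Module R M]
    [AddCommGroup P₀] [Module R P₀] [AddCommGroup P₁] [Module R P₁]
    [AddCommGroup P₂] [Module R P₂] [Module.Flat R P₀] [AddCommGroup Q] [Module R Q]
    (d₂ : P₂ →ₗ[R] P₁) (d₁ : P₁ →ₗ[R] P₀) (ε : P₀ →ₗ[R] M)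
    (h₂ : Function.Exact d₂ d₁) (h₁ : Function.Exact d₁ ε) (hε : Function.Surjective ε)
    (n m : ℕ) (φ : (Fin n → R) →ₗ[R] (Fin m → R))
    (ψ : (Fin m → R) →ₗ[R] (Fin n → R)) (hψ : ∀ f v, ψ f ⬝ᵥ v = f ⬝ᵥ φ v)
    (q : (Fin n → R) →ₗ[R] Q) (hqe : Function.Exact ψ q) (hqs : Function.Surjective q)
    (f : Q ⊗[R] P₂ →ₗ[R] LinearMap.ker (d₁.lTensor Q))
    (hf : ∀ x, (f x : _) = d₂.lTensor Q x) :
    Nonempty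
      ((LinearMap.ker (d₁.lTensor Q) ⧸ LinearMap.range f) ≃ₗ[R]
      (((Fin m → R) ⧸ LinearMap.range φ) →ₗ[R] M) ⧸
        LinearMap.range
          (TensorProduct.lift
            (LinearMap.smulRightₗ :
              ((((Fin m → R) ⧸ LinearMap.range φ) →ₗ[R] R)) →ₗ[R]
                M →ₗ[R] (((Fin m → R) ⧸ LinearMap.range φ) →ₗ[R] M)))) := by
  -- pairs `(z, y)` with `d z = ψ y`
  let Z : Submodule R (((Fin n → R) ⊗[R] P₁) × ((Fin m → R) ⊗[R] P₀)) :=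
    LinearMap.ker ((d₁.lTensor (Fin n → R)) ∘ₗ LinearMap.fst R _ _ -
      (ψ.rTensor P₀) ∘ₗ LinearMap.snd R _ _)
  have hZ : ∀ w : ((Fin n → R) ⊗[R] P₁) × ((Fin m → R) ⊗[R] P₀),
      w ∈ Z ↔ d₁.lTensor (Fin n → R) w.1 = ψ.rTensor P₀ w.2 := by
    intro w
    simp [Z, sub_eq_zero]
  have qd : ∀ {P P' : Type u} [AddCommGroup P] [Module R P] [AddCommGroup P'] [Module R P']
      (d : P →ₗ[R] P') (z : (Fin n → R) ⊗[R] P),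
      d.lTensor _ (q.rTensor P z) = q.rTensor P' (d.lTensor _ z) := by
    intro P P' _ _ _ _ d z
    rw [← LinearMap.comp_apply, ← LinearMap.comp_apply, LinearMap.lTensor_comp_rTensor,
      LinearMap.rTensor_comp_lTensor]
  have pd : ∀ {P P' : Type u} [AddCommGroup P] [Module R P] [AddCommGroup P'] [Module R P']
      (d : P →ₗ[R] P') (z : (Fin m → R) ⊗[R] P),
      d.lTensor _ (ψ.rTensor P z) = ψ.rTensor P' (d.lTensor _ z) := by
    intro P P' _ _ _ _ d z
    rw [← LinearMap.comp_apply, ← LinearMap.comp_apply, LinearMap.lTensor_comp_rTensor,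
      LinearMap.rTensor_comp_lTensor]
  have qe : ∀ (P : Type u) [AddCommGroup P] [Module R P],
      Function.Exact (ψ.rTensor P) (q.rTensor P) := fun P _ _ => rTensor_exact P hqe hqs
  have qs : ∀ (P : Type u) [AddCommGroup P] [Module R P],
      Function.Surjective (q.rTensor P) := fun P _ _ => LinearMap.rTensor_surjective P hqs
  have e2 : ∀ k : ℕ, Function.Exact (d₂.lTensor (Fin k → R)) (d₁.lTensor (Fin k → R)) :=
    fun k => Module.Flat.lTensor_exact _ h₂
  have e1 : ∀ k : ℕ, Function.Exact (d₁.lTensor (Fin k → R)) (ε.lTensor (Fin k → R)) :=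
    fun k => lTensor_exact _ h₁ hε
  have e0 : ∀ k : ℕ, Function.Surjective (ε.lTensor (Fin k → R)) :=
    fun k => LinearMap.lTensor_surjective _ hε
  -- the map to homology
  let α₀ : Z →ₗ[R] LinearMap.ker (d₁.lTensor Q) :=
    (q.rTensor P₁ ∘ₗ LinearMap.fst R _ _ ∘ₗ Z.subtype).codRestrict _ (by
      rintro ⟨w, hw⟩
      rw [hZ] at hw
      simp only [LinearMap.comp_apply, LinearMap.mem_ker, Submodule.subtype_apply,
        LinearMap.fst_apply]
      rw [qd, hw]
      exact (qe P₀).apply_apply_eq_zero _)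
  have hα₀ : ∀ z, (α₀ z : Q ⊗[R] P₁) = q.rTensor P₁ z.1.1 := fun z => rfl
  -- the map to `Hom(C, M)`
  have hvan : ∀ z : Z, LinearMap.range φ ≤ LinearMap.ker
      (pair R m M (ε.lTensor _ z.1.2)) := by
    rintro ⟨w, hw⟩
    rw [hZ] at hw
    rw [LinearMap.range_le_ker_iff, ← pair_rTensor φ ψ hψ, ← pd, ← hw,
      (e1 n).apply_apply_eq_zero, map_zero]
  let β₀ : Z →ₗ[R] (((Fin m → R) ⧸ LinearMap.range φ) →ₗ[R] M) :=
    { toFun := fun z => (LinearMap.range φ).liftQ _ (hvan z)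
      map_add' := by
        intro x y
        apply Submodule.linearMap_qext
        ext i
        simp
      map_smul' := by
        intro c x
        apply Submodule.linearMap_qext
        ext i
        simp }
  have hβ₀ : ∀ z, β₀ z ∘ₗ (LinearMap.range φ).mkQ = pair R m M (ε.lTensor _ z.1.2) :=
    fun z => Submodule.liftQ_mkQ _ _ _
  set ev := (TensorProduct.lift
            (LinearMap.smulRightₗ :
              ((((Fin m → R) ⧸ LinearMap.range φ) →ₗ[R] R)) →ₗ[R]
                M →ₗ[R] (((Fin m → R) ⧸ LinearMap.range φ) →ₗ[R] M))) with hev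
  -- the image of `Hom(C, R) ⊗ M` is the image of `ker (ψ ⊗ P₀)`
  have key1 : ∀ t, ∃ y' : (Fin m → R) ⊗[R] P₀, ψ.rTensor P₀ y' = 0 ∧
      pair R m M (ε.lTensor _ y') = ev t ∘ₗ (LinearMap.range φ).mkQ := by
    intro t
    induction t with
    | zero => exact ⟨0, by simp, by simp⟩
    | add s t hs ht =>
      obtain ⟨a, ha, ha'⟩ := hs
      obtain ⟨b, hb, hb'⟩ := ht
      exact ⟨a + b, by simp [ha, hb], by simp only [map_add, ha', hb', LinearMap.add_comp]⟩
    | tmul g x =>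
      obtain ⟨p, rfl⟩ := hε x
      let k : Fin m → R := fun i => g ((LinearMap.range φ).mkQ (Pi.single i 1))
      have hk : ∀ v, k ⬝ᵥ v = g ((LinearMap.range φ).mkQ v) := by
        intro v
        have : dotProductBilin R R k = g ∘ₗ (LinearMap.range φ).mkQ := by
          ext i
          simp [k]
        exact LinearMap.congr_fun this v
      have hk0 : ψ k = 0 := by
        apply dotProduct_eq_zero_iff.mp
        intro v
        rw [hψ, hk]
        have : (LinearMap.range φ).mkQ (φ v) = 0 := by simp
        rw [this, map_zero]
      refine ⟨k ⊗ₜ p, by simp [hk0], ?_⟩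
      apply LinearMap.ext
      intro v
      simp only [LinearMap.lTensor_tmul, pair_tmul, hk, hev, TensorProduct.lift.tmul,
        LinearMap.comp_apply]
      rfl
  have key2 : ∀ y' : (Fin m → R) ⊗[R] P₀, ψ.rTensor P₀ y' = 0 →
      ∃ t, pair R m M (ε.lTensor _ y') = ev t ∘ₗ (LinearMap.range φ).mkQ := by
    intro y' hy'
    have hex : Function.Exact ((LinearMap.ker ψ).subtype.rTensor P₀) (ψ.rTensor P₀) :=
      Module.Flat.rTensor_exact _ (LinearMap.exact_subtype_ker_map ψ)
    obtain ⟨s, rfl⟩ := (hex y').mp hy'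
    clear hy'
    induction s with
    | zero => exact ⟨0, by simp⟩
    | add s t hs ht =>
      obtain ⟨a, ha⟩ := hs
      obtain ⟨b, hb⟩ := ht
      exact ⟨a + b, by simp only [map_add, ha, hb, LinearMap.add_comp]⟩
    | tmul k p =>
      obtain ⟨k, hk⟩ := k
      refine ⟨(LinearMap.range φ).liftQ (dotProductBilin R R k) ?_ ⊗ₜ ε p, ?_⟩
      · rintro _ ⟨v, rfl⟩
        have := hψ k v
        rw [LinearMap.mem_ker.mp hk, zero_dotProduct] at this
        exact this.symm
      · apply LinearMap.ext
        intro v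
        simp only [LinearMap.rTensor_tmul, LinearMap.lTensor_tmul, pair_tmul, hev,
          TensorProduct.lift.tmul, LinearMap.comp_apply]
        rfl
  refine equiv_of_ker_eq (Z := Z) ((LinearMap.range f).mkQ ∘ₗ α₀) ((LinearMap.range ev).mkQ ∘ₗ β₀)
    ?_ ?_ ?_
  · refine (Submodule.mkQ_surjective _).comp ?_
    rintro ⟨c, hc⟩
    obtain ⟨z, rfl⟩ := qs P₁ c
    rw [LinearMap.mem_ker, qd] at hc
    obtain ⟨y, hy⟩ := ((qe P₀) _).mp hc
    exact ⟨⟨(z, y), (hZ _).mpr hy.symm⟩, rfl⟩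
  · refine (Submodule.mkQ_surjective _).comp ?_
    intro h
    obtain ⟨y, hy⟩ := e0 m (∑ i, Pi.single i 1 ⊗ₜ (h ∘ₗ (LinearMap.range φ).mkQ) (Pi.single i 1))
    have hy2 : pair R m M (ε.lTensor _ y) = h ∘ₗ (LinearMap.range φ).mkQ := by
      rw [hy, pair_inv]
    have : ε.lTensor _ (ψ.rTensor P₀ y) = 0 := by
      apply pair_injective n
      rw [pd, pair_rTensor φ ψ hψ, hy2, LinearMap.comp_assoc, LinearMap.range_mkQ_comp,
        LinearMap.comp_zero, map_zero]
    obtain ⟨z, hz⟩ := ((e1 n) _).mp this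
    refine ⟨⟨(z, y), (hZ _).mpr hz⟩, ?_⟩
    apply Submodule.linearMap_qext
    rw [hβ₀, ← hy2]
  · rintro ⟨⟨z, y⟩, hw⟩
    have hw' := (hZ _).mp hw
    simp only at hw'
    simp only [LinearMap.comp_apply, Submodule.mkQ_apply, Submodule.Quotient.mk_eq_zero]
    constructor
    · rintro ⟨s, hs⟩
      obtain ⟨w, rfl⟩ := qs P₂ s
      have hs' : d₂.lTensor Q (q.rTensor P₂ w) = q.rTensor P₁ z := by
        rw [← hf, hs, hα₀]
      rw [qd] at hs'
      have : q.rTensor P₁ (z - d₂.lTensor _ w) = 0 := by rw [map_sub, hs', sub_self]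
      obtain ⟨v, hv⟩ := ((qe P₁) _).mp this
      obtain ⟨t, ht⟩ := key2 (y - d₁.lTensor _ v) (by
        rw [map_sub, ← pd, hv, map_sub, hw', (e2 n).apply_apply_eq_zero, sub_zero, sub_self])
      refine ⟨t, ?_⟩
      apply Submodule.linearMap_qext
      rw [hβ₀, ← ht, map_sub, (e1 m).apply_apply_eq_zero, sub_zero]
    · rintro ⟨t, ht⟩
      obtain ⟨y', hy', ht'⟩ := key1 t
      rw [ht, hβ₀] at ht'
      have : ε.lTensor _ (y - y') = 0 := by
        rw [map_sub, pair_injective m ht', sub_self]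
      obtain ⟨v, hv⟩ := ((e1 m) _).mp this
      have h3 : d₁.lTensor _ (z - ψ.rTensor P₁ v) = 0 := by
        rw [map_sub, pd, hv, map_sub, hy', hw', sub_zero, sub_self]
      obtain ⟨w, hw2⟩ := ((e2 n) _).mp h3
      refine ⟨q.rTensor P₂ w, Subtype.ext ?_⟩
      rw [hf, hα₀, qd, hw2, map_sub, (qe P₁).apply_apply_eq_zero, sub_zero]

end TorCoker

theorem tor_coker_dual_iso
    (R : Type u) [CommRing R] (M : Type u) [AddCommGroup M] [Module R M]
    (n m : ℕ) (φ : (Fin n → R) →ₗ[R] (Fin m → R)) :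
    Nonempty
      ((((Tor (ModuleCat.{u} R) 1).obj
          (ModuleCat.of R
            ((Fin n → R) ⧸
              LinearMap.range (Matrix.toLin' (LinearMap.toMatrix' φ).transpose)))).obj
        (ModuleCat.of R M)) ≃ₗ[R]
      (((Fin m → R) ⧸ LinearMap.range φ) →ₗ[R] M) ⧸
        LinearMap.range
          (TensorProduct.lift
            (LinearMap.smulRightₗ :
              ((((Fin m → R) ⧸ LinearMap.range φ) →ₗ[R] R)) →ₗ[R]
                M →ₗ[R] (((Fin m → R) ⧸ LinearMap.range φ) →ₗ[R] M)))) := by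
  set ψ := Matrix.toLin' (LinearMap.toMatrix' φ).transpose with hψ
  have hadj : ∀ f v, ψ f ⬝ᵥ v = f ⬝ᵥ φ v := by
    intro f v
    rw [hψ, Matrix.toLin'_apply, Matrix.mulVec_transpose, ← Matrix.dotProduct_mulVec,
      LinearMap.toMatrix'_mulVec]
  obtain ⟨P⟩ : Nonempty (ProjectiveResolution (ModuleCat.of R M)) :=
    HasProjectiveResolution.out
  let C' : ModuleCat.{u} R := ModuleCat.of R ((Fin n → R) ⧸ LinearMap.range ψ)
  let F := (MonoidalCategory.tensoringLeft (ModuleCat.{u} R)).obj C'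
  let K := (F.mapHomologicalComplex (ComplexShape.down ℕ)).obj P.complex
  let S := K.sc' 2 1 0
  have i1 : ((Tor (ModuleCat.{u} R) 1).obj C').obj (ModuleCat.of R M) ≅
      S.moduleCatLeftHomologyData.H :=
    P.isoLeftDerivedObj F 1 ≪≫ ShortComplex.homologyMapIso (K.isoSc' 2 1 0 (by simp) (by simp))
      ≪≫ S.moduleCatHomologyIso
  have : Module.Projective R (P.complex.X 0) := (P.complex.X 0).projective_of_module_projective
  have h2 : Function.Exact (P.complex.d 2 1).hom (P.complex.d 1 0).hom :=
    (ShortComplex.ShortExact.moduleCat_exact_iff_function_exact _).mp (P.exact_succ 0)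
  have h1 : Function.Exact (P.complex.d 1 0).hom (P.π.f 0).hom :=
    (ShortComplex.ShortExact.moduleCat_exact_iff_function_exact _).mp P.exact₀
  have h0 : Function.Surjective (P.π.f 0).hom :=
    (ModuleCat.epi_iff_surjective _).mp inferInstance
  obtain ⟨e⟩ := TorCoker.core (P.complex.d 2 1).hom (P.complex.d 1 0).hom (P.π.f 0).hom
    h2 h1 h0 n m φ ψ hadj
    (LinearMap.range ψ).mkQ (LinearMap.exact_map_mkQ_range ψ) (Submodule.mkQ_surjective _) S.moduleCatToCycles (fun x => rfl)
  exact ⟨i1.toLinearEquiv ≪≫ₗ e⟩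
end

section
/- Let V be a commutative ring, m ⊆ V an ideal satisfying m·m = m, and R a commutative V-algebra. Let (M_n, φ_n : M_n → M_{n+1})_{n∈ℕ} be a direct system of R-modules, and let (ε_n)_{n∈ℕ}, (δ_n)_{n∈ℕ} be sequences of ideals of V such that: (a) (ε_n) converges to V and ∏_{j≥0} δ_j is a Cauchy product; (b) ε_n·Ext^i_R(M_n, N) = 0 and δ_n·Ext^i_R(coker(φ_n), N) = 0 for every R-module N, every integer i > 0 and every n; (c) δ_n·ker(φ_n) = 0 for every n. Then the colimit colim_{n∈ℕ} M_n is an almost projective R-module, i.e. m·Ext^i_R(colim_n M_n, N) = 0 for every R-module N and every i > 0. -/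
universe u v

open CategoryTheory

/-- Almost projective `R`-module: `m·Ext^i_R(M, N) = 0` for all `N` and all `i > 0`. -/
def IsAlmostProjective (V : Type v) [CommRing V] (m : Ideal V)
    (R : Type u) [CommRing R] [Algebra V R]
    (M : Type u) [AddCommGroup M] [Module R M] : Prop :=
  ∀ i : ℕ, 0 < i → ∀ N : ModuleCat.{u} R, ∀ a ∈ m,
    ∀ x : ((Ext R (ModuleCat.{u} R) i).obj (Opposite.op (ModuleCat.of R M))).obj N,
      algebraMap V R a • x = 0

/-- A sequence of ideals of `V` converges to `V` if every finitely generated subideal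
of `m` is eventually contained in all members of the sequence. -/
def IdealSeqTendstoTop {V : Type v} [CommRing V] (m : Ideal V)
    (ε : ℕ → Ideal V) : Prop :=
  ∀ m₀ : Ideal V, m₀.FG → m₀ ≤ m → ∃ n₀ : ℕ, ∀ n ≥ n₀, m₀ ≤ ε n

/-- The formal infinite product `∏_{j≥0} δ_j` of ideals of `V` is a Cauchy product if
for every finitely generated ideal `m₀ ⊆ m` there is `n₀` such that
`m₀ ⊆ δ_n·δ_{n+1}·⋯·δ_{n+p}` for all `n ≥ n₀` and all `p ≥ 0`. -/
def IdealSeqCauchyProduct {V : Type v} [CommRing V] (m : Ideal V)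
    (δ : ℕ → Ideal V) : Prop :=
  ∀ m₀ : Ideal V, m₀.FG → m₀ ≤ m →
    ∃ n₀ : ℕ, ∀ n ≥ n₀, ∀ p : ℕ, m₀ ≤ ∏ j ∈ Finset.range (p + 1), δ (n + j)


lemma sc_homology_smul {R : Type u} [CommRing R] (S : ShortComplex (ModuleCat.{u} R)) (r : R) :
    (∀ x : S.homology, r • x = 0) ↔
      ∀ z : S.X₂, S.g z = 0 → ∃ w : S.X₁, S.f w = r • z := by
  let e := S.moduleCatHomologyIso.toLinearEquiv
  have h1 : (∀ x : S.homology, r • x = 0) ↔ ∀ x : S.moduleCatLeftHomologyData.H, r • x = 0 := by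
    constructor
    · intro h x
      apply e.symm.injective
      rw [map_smul, h, map_zero]
    · intro h x
      apply e.injective
      rw [map_smul, h, map_zero]
  rw [h1]
  constructor
  · intro h z hz
    have := h ((LinearMap.range S.moduleCatToCycles).mkQ ⟨z, hz⟩)
    erw [← Submodule.Quotient.mk_smul, Submodule.Quotient.mk_eq_zero] at this
    obtain ⟨w, hw⟩ := this
    exact ⟨w, congrArg Subtype.val hw⟩
  · intro h x
    obtain ⟨⟨z, hz⟩, rfl⟩ := Submodule.Quotient.mk_surjective _ x
    obtain ⟨w, hw⟩ := h z hz
    erw [← Submodule.Quotient.mk_smul, Submodule.Quotient.mk_eq_zero]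
    exact ⟨w, Subtype.ext hw⟩

lemma ext_smul_iff {R : Type u} [CommRing R] {X : ModuleCat.{u} R} (P : ProjectiveResolution X)
    (Y : ModuleCat.{u} R) (n : ℕ) (r : R) :
    (∀ x : ((Ext R (ModuleCat.{u} R) (n + 1)).obj (Opposite.op X)).obj Y, r • x = 0) ↔
      ∀ g : P.complex.X (n + 1) ⟶ Y, P.complex.d (n + 2) (n + 1) ≫ g = 0 →
        ∃ h : P.complex.X n ⟶ Y, P.complex.d (n + 1) n ≫ h = r • g := by
  let K := P.complex.linearYonedaObj R Y
  let e := (P.isoExt (R := R) (n + 1) Y ≪≫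
    (ShortComplex.homologyMapIso (K.isoSc' n (n + 1) (n + 2) (by simp) (by simp)))).toLinearEquiv
  have h1 : (∀ x : ((Ext R (ModuleCat.{u} R) (n + 1)).obj (Opposite.op X)).obj Y, r • x = 0) ↔
      ∀ x : (K.sc' n (n + 1) (n + 2)).homology, r • x = 0 := by
    constructor
    · intro h x
      apply e.symm.injective
      rw [map_smul, h, map_zero]
    · intro h x
      apply e.injective
      rw [map_smul, h, map_zero]
  rw [h1, sc_homology_smul]
  rfl

/-- Multiplication by `r` on `X` factors through a projective object. -/
def FactorsProj {R : Type u} [CommRing R] (r : R) (X : ModuleCat.{u} R) : Prop :=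
  ∃ (Q : ModuleCat.{u} R) (_ : Projective Q) (α : X ⟶ Q) (β : Q ⟶ X), α ≫ β = r • 𝟙 X

lemma exists_augmentation {R : Type u} [CommRing R] {X : ModuleCat.{u} R}
    (P : ProjectiveResolution X) :
    ∃ (p : P.complex.X 0 ⟶ X) (_ : Epi p) (w : P.complex.d 1 0 ≫ p = 0),
      (ShortComplex.mk _ _ w).Exact := by
  refine ⟨P.π.f 0, ?_, P.complex_d_comp_π_f_zero, P.exact₀⟩
  exact (inferInstance : Epi (P.π.f 0))

lemma factorsProj_of_ext {R : Type u} [CommRing R] {r : R} {X : ModuleCat.{u} R}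
    (h : ∀ N : ModuleCat.{u} R,
      ∀ x : ((Ext R (ModuleCat.{u} R) 1).obj (Opposite.op X)).obj N, r • x = 0) :
    FactorsProj r X := by
  let P : ProjectiveResolution X := projectiveResolution X
  obtain ⟨p, hp, w, hex⟩ := exists_augmentation P
  let ι := Limits.kernel.ι p
  let q : P.complex.X 1 ⟶ Limits.kernel p := Limits.kernel.lift p (P.complex.d 1 0) w
  have hq : q ≫ ι = P.complex.d 1 0 := Limits.kernel.lift_ι _ _ _
  have hdq : P.complex.d 2 1 ≫ q = 0 := by
    rw [← cancel_mono ι, Category.assoc, hq, Limits.zero_comp]; simp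
  obtain ⟨t, ht⟩ := (ext_smul_iff P _ 0 r).1 (h _) q hdq
  replace ht : P.complex.d 1 0 ≫ t = r • q := ht
  have h0 : P.complex.d 1 0 ≫ (r • 𝟙 _ - t ≫ ι) = 0 := by
    rw [Preadditive.comp_sub, ← Category.assoc, ht, Linear.smul_comp, hq]; simp
  let σ : X ⟶ P.complex.X 0 := hex.desc _ h0
  have hσ : p ≫ σ = r • 𝟙 _ - t ≫ ι := hex.g_desc _ h0
  refine ⟨P.complex.X 0, P.projective 0, σ, p, ?_⟩
  rw [← cancel_epi p, ← Category.assoc, hσ, Preadditive.sub_comp, Category.assoc,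
    Limits.kernel.condition]
  simp

lemma ext_smul_of_factorsProj {R : Type u} [CommRing R] {r : R} {X : ModuleCat.{u} R}
    (hF : FactorsProj r X) (i : ℕ) (hi : 0 < i) (N : ModuleCat.{u} R)
    (x : ((Ext R (ModuleCat.{u} R) i).obj (Opposite.op X)).obj N) : r • x = 0 := by
  obtain ⟨n, rfl⟩ : ∃ n, i = n + 1 := ⟨i - 1, by omega⟩
  let P : ProjectiveResolution X := projectiveResolution X
  obtain ⟨p, hp, w, hex⟩ := exists_augmentation P
  obtain ⟨Q, hQ, α, β, hαβ⟩ := hF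
  let β' : Q ⟶ P.complex.X 0 := Projective.factorThru β p
  have hβ' : β' ≫ p = β := Projective.factorThru_comp _ _
  have hhom : ∀ n : ℕ, ∃ (s : P.complex.X n ⟶ P.complex.X (n + 1))
      (s' : P.complex.X (n + 1) ⟶ P.complex.X (n + 2)),
      s' ≫ P.complex.d (n + 2) (n + 1) = r • 𝟙 _ - P.complex.d (n + 1) n ≫ s := by
    have step : ∀ n (s : P.complex.X n ⟶ P.complex.X (n + 1)),
        P.complex.d (n + 1) n ≫ s ≫ P.complex.d (n + 1) n = r • P.complex.d (n + 1) n →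
        ∃ s' : P.complex.X (n + 1) ⟶ P.complex.X (n + 2),
          s' ≫ P.complex.d (n + 2) (n + 1) = r • 𝟙 _ - P.complex.d (n + 1) n ≫ s := by
      intro n s hs
      have hz : (r • 𝟙 (P.complex.X (n + 1)) - P.complex.d (n + 1) n ≫ s) ≫
          P.complex.d (n + 1) n = 0 := by
        simp [Preadditive.sub_comp, hs]
      exact ⟨(P.exact_succ n).liftFromProjective _ hz, (P.exact_succ n).liftFromProjective_comp _ hz⟩
    intro n
    induction n with
    | zero =>
      have hz : (r • 𝟙 (P.complex.X 0) - p ≫ α ≫ β') ≫ p = 0 := by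
        simp only [Preadditive.sub_comp, Category.assoc, hβ', hαβ]
        simp
      obtain ⟨s, hs⟩ : ∃ s : P.complex.X 0 ⟶ P.complex.X 1,
          s ≫ P.complex.d 1 0 = r • 𝟙 (P.complex.X 0) - p ≫ α ≫ β' :=
        ⟨hex.liftFromProjective _ hz, hex.liftFromProjective_comp _ hz⟩
      refine ⟨s, step 0 s ?_⟩
      rw [hs, Preadditive.comp_sub, ← Category.assoc, w, Limits.zero_comp]
      simp
    | succ n ih =>
      obtain ⟨s, s', h⟩ := ih
      refine ⟨s', step (n + 1) s' ?_⟩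
      rw [h]
      simp [Preadditive.comp_sub]
  obtain ⟨s, s', h⟩ := hhom n
  refine (ext_smul_iff P N n r).2 (fun g hg => ⟨s ≫ g, ?_⟩) x
  have := congrArg (· ≫ g) h
  simp only [Category.assoc, hg, Limits.comp_zero, Preadditive.sub_comp, Linear.smul_comp,
    Category.id_comp] at this
  exact (sub_eq_zero.1 this.symm).symm

lemma FactorsProj.exists_lift {R : Type u} [CommRing R] {r : R} {M A B : Type u}
    [AddCommGroup M] [Module R M] [AddCommGroup A] [Module R A] [AddCommGroup B] [Module R B]
    (h : FactorsProj r (ModuleCat.of R M)) (p : A →ₗ[R] B) (hp : Function.Surjective p)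
    (g : M →ₗ[R] B) : ∃ s : M →ₗ[R] A, ∀ x, p (s x) = r • g x := by
  obtain ⟨Q, hQ, α, β, hαβ⟩ := h
  have : Epi (ModuleCat.ofHom p) := (ModuleCat.epi_iff_surjective _).2 hp
  have h1 : (α ≫ Projective.factorThru (β ≫ ModuleCat.ofHom g) (ModuleCat.ofHom p)) ≫
      ModuleCat.ofHom p = r • ModuleCat.ofHom g := by
    rw [Category.assoc, Projective.factorThru_comp, ← Category.assoc, hαβ]
    simp
  refine ⟨(α ≫ Projective.factorThru (β ≫ ModuleCat.ofHom g) (ModuleCat.ofHom p)).hom, fun x => ?_⟩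
  exact congrArg (fun φ : ModuleCat.of R M ⟶ ModuleCat.of R B => φ.hom x) h1

lemma factorsProj_of_section {R : Type u} [CommRing R] {r : R} {M P : Type u}
    [AddCommGroup M] [Module R M] [AddCommGroup P] [Module R P] [Module.Projective R P]
    (p : P →ₗ[R] M) (s : M →ₗ[R] P) (h : ∀ x, p (s x) = r • x) :
    FactorsProj r (ModuleCat.of R M) := by
  refine ⟨ModuleCat.of R P, (IsProjective.iff_projective P).1 inferInstance,
    ModuleCat.ofHom s, ModuleCat.ofHom p, ?_⟩
  ext x
  exact h x

/-- One step extension. -/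
lemma extend_step {R : Type u} [CommRing R] {d e : R} {A B K : Type u}
    [AddCommGroup A] [Module R A] [AddCommGroup B] [Module R B] [AddCommGroup K] [Module R K]
    (φ : A →ₗ[R] B) (hd : ∀ x ∈ LinearMap.ker φ, d • x = 0)
    (he : FactorsProj e (ModuleCat.of R (B ⧸ LinearMap.range φ))) (u : A →ₗ[R] K) :
    ∃ v : B →ₗ[R] K, v ∘ₗ φ = (e * d) • u := by
  obtain ⟨s, hs⟩ := he.exists_lift (LinearMap.range φ).mkQ (Submodule.mkQ_surjective _)
    LinearMap.id
  let r : B →ₗ[R] LinearMap.range φ :=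
    LinearMap.codRestrict (LinearMap.range φ)
      (e • LinearMap.id - s ∘ₗ (LinearMap.range φ).mkQ) (by
        intro x
        rw [← Submodule.Quotient.mk_eq_zero, ← Submodule.mkQ_apply, LinearMap.sub_apply,
          map_sub, LinearMap.comp_apply, hs]
        simp)
  have hr : ∀ x, r (φ x) = e • ⟨φ x, LinearMap.mem_range_self φ x⟩ := by
    intro x
    apply Subtype.ext
    have : (LinearMap.range φ).mkQ (φ x) = 0 := by simp
    simp only [r, LinearMap.codRestrict_apply, LinearMap.sub_apply, LinearMap.comp_apply, this]
    simp
  let u' : (A ⧸ LinearMap.ker φ) →ₗ[R] K := (LinearMap.ker φ).liftQ (d • u) (by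
    intro x hx
    rw [LinearMap.mem_ker, LinearMap.smul_apply, ← map_smul, hd x hx, map_zero])
  refine ⟨u' ∘ₗ φ.quotKerEquivRange.symm.toLinearMap ∘ₗ r, ?_⟩
  ext x
  have h2 : φ.quotKerEquivRange.symm ⟨φ x, LinearMap.mem_range_self φ x⟩ =
      (LinearMap.ker φ).mkQ x := by
    rw [LinearEquiv.symm_apply_eq]; rfl
  simp only [LinearMap.comp_apply, LinearEquiv.coe_coe, hr, map_smul, h2]
  simp [u', mul_smul]

lemma lim_one_step {V : Type v} [CommRing V] {B : ℕ → Type u} [∀ k, AddCommGroup (B k)]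
    [∀ k, Module V (B k)] (g : ∀ k, B (k + 1) →ₗ[V] B k) (I : ℕ → Ideal V)
    (hI : ∀ k, I k ≤ I (k + 1) * I (k + 1))
    (hg : ∀ k, ∀ a ∈ I (k + 1), ∀ x : B k, a • x ∈ LinearMap.range (g k)) (a : V) (ha : a ∈ I 0)
    (y : ∀ k, B k) : ∃ x : ∀ k, B k, ∀ k, x k - g k (x (k + 1)) = a • y k := by
  have haI : ∀ k, a ∈ I k := by
    intro k
    induction k with
    | zero => exact ha
    | succ k ih => exact Ideal.mul_le_left (hI k ih)
  have key : ∀ k, ∀ x : B k, x ∈ I k • (⊤ : Submodule V (B k)) →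
      ∃ x' : B (k + 1), x' ∈ I (k + 1) • (⊤ : Submodule V (B (k + 1))) ∧
        x - g k x' = a • y k := by
    intro k x hx
    have h1 : x - a • y k ∈ I k • (⊤ : Submodule V (B k)) :=
      sub_mem hx (Submodule.smul_mem_smul (haI k) trivial)
    have h2 : I k • (⊤ : Submodule V (B k)) ≤
        (I (k + 1) • (⊤ : Submodule V (B (k + 1)))).map (g k) := by
      rw [Submodule.map_smul'']
      refine (Submodule.smul_mono_left (hI k)).trans ?_
      rw [Submodule.mul_smul]
      refine Submodule.smul_mono le_rfl ?_
      rw [Submodule.smul_le]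
      intro b hb z _
      rw [Submodule.map_top]
      exact hg k b hb z
    obtain ⟨x', hx', h⟩ := h2 h1
    exact ⟨x', hx', by rw [h]; abel⟩
  choose F hF1 hF2 using key
  let X : ∀ k, {x : B k // x ∈ I k • (⊤ : Submodule V (B k))} := fun k =>
    Nat.rec ⟨0, zero_mem _⟩ (fun k x => ⟨F k x.1 x.2, hF1 k x.1 x.2⟩) k
  exact ⟨fun k => (X k).1, fun k => hF2 k _ (X k).2⟩

lemma exists_fg_sq {V : Type v} [CommRing V] {m : Ideal V} (hm : m * m = m) (I : Ideal V)
    (hI : I.FG) (hIm : I ≤ m) : ∃ J : Ideal V, J.FG ∧ J ≤ m ∧ I ≤ J * J := by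
  have hel : ∀ x ∈ m, ∃ J : Ideal V, J.FG ∧ J ≤ m ∧ x ∈ J * J := by
    intro x hx
    rw [← hm] at hx
    refine Submodule.mul_induction_on hx ?_ ?_
    · intro b hb c hc
      refine ⟨Ideal.span {b, c}, Submodule.fg_span (by simp), ?_, ?_⟩
      · rw [Ideal.span_le]
        rintro z (rfl | rfl) <;> assumption
      · exact Ideal.mul_mem_mul (Ideal.subset_span (by simp)) (Ideal.subset_span (by simp))
    · rintro b c ⟨J, h1, h2, h3⟩ ⟨J', h1', h2', h3'⟩
      refine ⟨J ⊔ J', Submodule.FG.sup h1 h1', sup_le h2 h2', add_mem ?_ ?_⟩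
      · exact Ideal.mul_mono le_sup_left le_sup_left h3
      · exact Ideal.mul_mono le_sup_right le_sup_right h3'
  induction I, hI using Submodule.fg_induction with
  | singleton x =>
    obtain ⟨J, h1, h2, h3⟩ := hel x (hIm (Submodule.mem_span_singleton_self x))
    exact ⟨J, h1, h2, by rwa [Submodule.span_singleton_le_iff_mem]⟩
  | sup A B hA hB ihA ihB =>
    obtain ⟨J, h1, h2, h3⟩ := ihA (le_sup_left.trans hIm)
    obtain ⟨J', h1', h2', h3'⟩ := ihB (le_sup_right.trans hIm)
    refine ⟨J ⊔ J', Submodule.FG.sup h1 h1', sup_le h2 h2', sup_le ?_ ?_⟩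
    · exact h3.trans (Ideal.mul_mono le_sup_left le_sup_left)
    · exact h3'.trans (Ideal.mul_mono le_sup_right le_sup_right)

lemma exists_fg_seq {V : Type v} [CommRing V] {m : Ideal V} (hm : m * m = m) (a : V)
    (ha : a ∈ m) : ∃ I : ℕ → Ideal V, (∀ k, (I k).FG) ∧ (∀ k, I k ≤ m) ∧
      (∀ k, I k ≤ I (k + 1) * I (k + 1)) ∧ a ∈ I 0 := by
  choose F h1 h2 h3 using exists_fg_sq hm
  let X : ℕ → {I : Ideal V // I.FG ∧ I ≤ m} := fun k =>
    Nat.rec ⟨Ideal.span {a}, ⟨{a}, by simp⟩, by rwa [Ideal.span_singleton_le_iff_mem]⟩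
      (fun _ I => ⟨F I.1 I.2.1 I.2.2, h1 _ _ _, h2 _ _ _⟩) k
  refine ⟨fun k => (X k).1, fun k => (X k).2.1, fun k => (X k).2.2, fun k => h3 _ _ _, ?_⟩
  exact Ideal.mem_span_singleton_self a

section Main

variable {V : Type v} [CommRing V] {R : Type u} [CommRing R] [Algebra V R]
    {M : ℕ → Type u} [∀ n, AddCommGroup (M n)] [∀ n, Module R (M n)]
    (f : ∀ i j : ℕ, i ≤ j → M i →ₗ[R] M j)
    [DirectedSystem M fun i j h => f i j h]
    {δ : ℕ → Ideal V}

lemma extend_multi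
    (hcok : ∀ n, ∀ a ∈ δ n, FactorsProj (algebraMap V R a) (ModuleCat.of R
            (M (n + 1) ⧸ LinearMap.range (f n (n + 1) (Nat.le_succ n)))))
    (hker : ∀ n : ℕ, ∀ a ∈ δ n, ∀ x ∈ LinearMap.ker (f n (n + 1) (Nat.le_succ n)),
      algebraMap V R a • x = 0) {K : Type u} [AddCommGroup K] [Module R K] (n p : ℕ) :
    ∀ a ∈ (∏ j ∈ Finset.range p, δ (n + j)) * (∏ j ∈ Finset.range p, δ (n + j)),
      ∀ u : M n →ₗ[R] K, ∃ v : M (n + p) →ₗ[R] K,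
        v ∘ₗ f n (n + p) (Nat.le_add_right n p) = algebraMap V R a • u := by
  induction p with
  | zero =>
    intro a _ u
    refine ⟨algebraMap V R a • u, ?_⟩
    ext x
    have := DirectedSystem.map_self (f := fun i j h => f i j h) (i := n) x
    simp only [LinearMap.comp_apply]
    exact congrArg _ this
  | succ p ih =>
    intro a ha u
    rw [Finset.prod_range_succ, mul_mul_mul_comm] at ha
    refine Submodule.mul_induction_on ha ?_ ?_
    · intro b hb c hc
      obtain ⟨v, hv⟩ := ih b hb u
      obtain ⟨w, hw⟩ : ∃ w : M (n + p + 1) →ₗ[R] K,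
          w ∘ₗ f (n + p) (n + p + 1) (Nat.le_succ _) = algebraMap V R c • v := by
        refine Submodule.mul_induction_on hc ?_ ?_
        · intro d hd e he
          obtain ⟨w, hw⟩ := extend_step (f (n + p) (n + p + 1) (Nat.le_succ _))
            (hker (n + p) e he) (hcok (n + p) d hd) v
          exact ⟨w, by rw [hw, map_mul]⟩
        · rintro x y ⟨w, hw⟩ ⟨w', hw'⟩
          exact ⟨w + w', by rw [LinearMap.add_comp, hw, hw', map_add, add_smul]⟩
      refine ⟨w, ?_⟩
      ext x
      have h1 : f n (n + (p + 1)) (Nat.le_add_right n (p + 1)) x =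
          f (n + p) (n + p + 1) (Nat.le_succ _) (f n (n + p) (Nat.le_add_right n p) x) :=
        (DirectedSystem.map_map (f := fun i j h => f i j h) (Nat.le_add_right n p)
          (Nat.le_succ (n + p)) x).symm
      have h2 := LinearMap.congr_fun hw (f n (n + p) (Nat.le_add_right n p) x)
      have h3 := LinearMap.congr_fun hv x
      simp only [LinearMap.comp_apply, LinearMap.smul_apply] at h2 h3 ⊢
      rw [h1, h2, h3, smul_smul, map_mul, mul_comm]
    · rintro x y ⟨w, hw⟩ ⟨w', hw'⟩
      exact ⟨w + w', by rw [LinearMap.add_comp, hw, hw', map_add, add_smul]⟩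

lemma extend_multi'
    (hcok : ∀ n, ∀ a ∈ δ n, FactorsProj (algebraMap V R a) (ModuleCat.of R
            (M (n + 1) ⧸ LinearMap.range (f n (n + 1) (Nat.le_succ n)))))
    (hker : ∀ n : ℕ, ∀ a ∈ δ n, ∀ x ∈ LinearMap.ker (f n (n + 1) (Nat.le_succ n)),
      algebraMap V R a • x = 0) {K : Type u} [AddCommGroup K] [Module R K] (n l : ℕ)
    (hnl : n < l) (J : Ideal V) (hJ : ∀ p : ℕ, J ≤ ∏ j ∈ Finset.range (p + 1), δ (n + j))
    (a : V) (ha : a ∈ J * J) (u : M n →ₗ[R] K) :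
    ∃ v : M l →ₗ[R] K, v ∘ₗ f n l hnl.le = algebraMap V R a • u := by
  obtain ⟨p, rfl⟩ : ∃ p, l = n + (p + 1) := ⟨l - n - 1, by omega⟩
  exact extend_multi f hcok hker n (p + 1) a (Ideal.mul_mono (hJ p) (hJ p) ha) u

lemma core_lift {m : Ideal V} (hm : m * m = m) {ε : ℕ → Ideal V}
    (hε : IdealSeqTendstoTop m ε) (hδ : IdealSeqCauchyProduct m δ)
    (hM : ∀ n, ∀ a ∈ ε n, FactorsProj (algebraMap V R a) (ModuleCat.of R (M n)))
    (hcok : ∀ n, ∀ a ∈ δ n, FactorsProj (algebraMap V R a) (ModuleCat.of R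
            (M (n + 1) ⧸ LinearMap.range (f n (n + 1) (Nat.le_succ n)))))
    (hker : ∀ n : ℕ, ∀ a ∈ δ n, ∀ x ∈ LinearMap.ker (f n (n + 1) (Nat.le_succ n)),
      algebraMap V R a • x = 0) (b c : V) (hb : b ∈ m) (hc : c ∈ m)
    {L P : Type u} [AddCommGroup L] [Module R L] [AddCommGroup P] [Module R P]
    (ι : ∀ n, M n →ₗ[R] L) (hι : ∀ i j (h : i ≤ j) (x : M i), ι j (f i j h x) = ι i x)
    (p : P →ₗ[R] L) (hp : Function.Surjective p) :
    ∃ τ : ∀ n, M n →ₗ[R] P, (∀ i j (h : i ≤ j) (x : M i), τ j (f i j h x) = τ i x) ∧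
      ∀ n x, p (τ n x) = algebraMap V R (b * c) • ι n x := by
  obtain ⟨I, hIfg, hIm, hI, hcI⟩ := exists_fg_seq hm c hc
  obtain ⟨N, hN⟩ := hε (Ideal.span {b}) ⟨{b}, by simp⟩
    (by rwa [Ideal.span_singleton_le_iff_mem])
  obtain ⟨t, ht, htP⟩ := Filter.extraction_forall_of_eventually'
    (P := fun k n => N ≤ n ∧ ∀ p : ℕ, I (k + 2) ≤ ∏ j ∈ Finset.range (p + 1), δ (n + j)) (by
      intro k
      obtain ⟨n₀, hn₀⟩ := hδ (I (k + 2)) (hIfg _) (hIm _)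
      exact ⟨max N n₀, fun n hn => ⟨(le_max_left _ _).trans hn,
        hn₀ n ((le_max_right _ _).trans hn)⟩⟩)
  have hs : ∀ k, ∃ s : M (t k) →ₗ[R] P, ∀ x, p (s x) = algebraMap V R b • ι (t k) x :=
    fun k => (hM (t k) b (hN _ (htP k).1 (Ideal.mem_span_singleton_self b))).exists_lift p hp _
  choose s hs using hs
  have hlt : ∀ k, t k < t (k + 1) := fun k => ht (Nat.lt_succ_self k)
  let K := LinearMap.ker p
  let y : ∀ k, M (t k) →ₗ[R] K := fun k =>
    LinearMap.codRestrict K (s k - s (k + 1) ∘ₗ f _ _ (hlt k).le) (by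
      intro x
      rw [LinearMap.mem_ker, LinearMap.sub_apply, map_sub, LinearMap.comp_apply, hs, hs, hι,
        sub_self])
  let inst : ∀ k, Module V (M (t k) →ₗ[R] K) := fun k =>
    Module.compHom (M (t k) →ₗ[R] K) (algebraMap V R)
  obtain ⟨x, hx⟩ := lim_one_step (V := V) (B := fun k => M (t k) →ₗ[R] K)
    (fun k => { toFun := fun u => u ∘ₗ f _ _ (hlt k).le
                map_add' := fun _ _ => rfl
                map_smul' := fun _ _ => rfl }) I hI (by
      intro k a ha u
      obtain ⟨v, hv⟩ := extend_multi' f hcok hker (t k) (t (k + 1)) (hlt k) (I (k + 2))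
        (htP k).2 a (hI _ ha) u
      exact ⟨v, hv⟩) c hcI y
  let σ : ∀ k, M (t k) →ₗ[R] P := fun k =>
    algebraMap V R c • s k - K.subtype ∘ₗ x k
  have hσ1 : ∀ k z, σ (k + 1) (f _ _ (hlt k).le z) = σ k z := by
    intro k z
    have h1 : (x k z : P) - x (k + 1) (f _ _ (hlt k).le z) =
        algebraMap V R c • (s k z - s (k + 1) (f _ _ (hlt k).le z)) :=
      congrArg (fun w : M (t k) →ₗ[R] K => ((w z : K) : P)) (hx k)
    simp only [σ, LinearMap.sub_apply, LinearMap.smul_apply, LinearMap.comp_apply,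
      Submodule.subtype_apply]
    rw [smul_sub] at h1
    rw [sub_eq_sub_iff_add_eq_add] at h1 ⊢
    rw [add_comm, h1, add_comm]
  have hσ : ∀ k l (h : k ≤ l) z, σ l (f _ _ (ht.monotone h) z) = σ k z := by
    intro k l h
    induction l, h using Nat.le_induction with
    | base =>
      intro z
      exact congrArg _ (DirectedSystem.map_self (f := fun i j h => f i j h) z)
    | succ l h ih =>
      intro z
      rw [← ih z, ← hσ1 l]
      exact congrArg _ (DirectedSystem.map_map (f := fun i j h => f i j h) (ht.monotone h)
        (hlt l).le z).symm
  have hpσ : ∀ k z, p (σ k z) = algebraMap V R (b * c) • ι (t k) z := by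
    intro k z
    have : p (x k z : P) = 0 := (x k z).2
    simp only [σ, LinearMap.sub_apply, LinearMap.smul_apply, LinearMap.comp_apply,
      Submodule.subtype_apply, map_sub, map_smul, this, hs, sub_zero, smul_smul, map_mul,
      mul_comm]
  have hid : ∀ i, i ≤ t i := fun i => ht.le_apply
  refine ⟨fun i => σ i ∘ₗ f i (t i) (hid i), ?_, ?_⟩
  · intro i j hij z
    simp only [LinearMap.comp_apply]
    rw [← hσ i j hij]
    refine congrArg _ ?_
    exact (DirectedSystem.map_map (f := fun i j h => f i j h) hij (hid j) z).trans
      (DirectedSystem.map_map (f := fun i j h => f i j h) (hid i) (ht.monotone hij) z).symm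
  · intro i z
    simp only [LinearMap.comp_apply, hpσ]
    exact congrArg _ (hι _ _ _ _)

lemma core {m : Ideal V} (hm : m * m = m) {ε : ℕ → Ideal V}
    (hε : IdealSeqTendstoTop m ε) (hδ : IdealSeqCauchyProduct m δ)
    (hM : ∀ n, ∀ a ∈ ε n, FactorsProj (algebraMap V R a) (ModuleCat.of R (M n)))
    (hcok : ∀ n, ∀ a ∈ δ n, FactorsProj (algebraMap V R a) (ModuleCat.of R
            (M (n + 1) ⧸ LinearMap.range (f n (n + 1) (Nat.le_succ n)))))
    (hker : ∀ n : ℕ, ∀ a ∈ δ n, ∀ x ∈ LinearMap.ker (f n (n + 1) (Nat.le_succ n)),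
      algebraMap V R a • x = 0) (b c : V) (hb : b ∈ m) (hc : c ∈ m) :
    FactorsProj (algebraMap V R (b * c)) (ModuleCat.of R (Module.DirectLimit M f)) := by
  obtain ⟨τ, h1, h2⟩ := core_lift f hm hε hδ hM hcok hker b c hb hc
    (Module.DirectLimit.of R ℕ M f) (fun i j h x => Module.DirectLimit.of_f)
    (Finsupp.linearCombination R id)
    (Finsupp.linearCombination_id_surjective R (Module.DirectLimit M f))
  refine factorsProj_of_section (Finsupp.linearCombination R id)
    (Module.DirectLimit.lift R ℕ M f τ h1) ?_
  intro z
  obtain ⟨i, w, rfl⟩ := Module.DirectLimit.exists_of z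
  rw [Module.DirectLimit.lift_of, h2]

end Main

/-- Let `(M_n, φ_n)` be a direct system of `R`-modules, and let
`(ε_n)`, `(δ_n)` be sequences of ideals of `V` such that `(ε_n)` converges to `V` and
`∏ δ_j` is a Cauchy product, `ε_n·Ext^i_R(M_n, N) = 0` and
`δ_n·Ext^i_R(coker φ_n, N) = 0` for all `R`-modules `N`, all `i > 0` and all `n`, and
`δ_n·ker φ_n = 0` for all `n`.  Then `colim_n M_n` is an almost projective `R`-module,
i.e. `m·Ext^i_R(colim M_n, N) = 0` for all `N` and all `i > 0`. -/
theorem directLimit_isAlmostProjective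
    (V : Type v) [CommRing V] (m : Ideal V) (hm : m * m = m)
    (R : Type u) [CommRing R] [Algebra V R]
    (M : ℕ → Type u) [∀ n, AddCommGroup (M n)] [∀ n, Module R (M n)]
    (f : ∀ i j : ℕ, i ≤ j → M i →ₗ[R] M j)
    [DirectedSystem M fun i j h => f i j h]
    (ε δ : ℕ → Ideal V)
    (hε : IdealSeqTendstoTop m ε) (hδ : IdealSeqCauchyProduct m δ)
    (hExtM : ∀ n : ℕ, ∀ i : ℕ, 0 < i → ∀ N : ModuleCat.{u} R, ∀ a ∈ ε n,
      ∀ x : ((Ext R (ModuleCat.{u} R) i).obj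
          (Opposite.op (ModuleCat.of R (M n)))).obj N,
        algebraMap V R a • x = 0)
    (hExtCoker : ∀ n : ℕ, ∀ i : ℕ, 0 < i → ∀ N : ModuleCat.{u} R, ∀ a ∈ δ n,
      ∀ x : ((Ext R (ModuleCat.{u} R) i).obj
          (Opposite.op (ModuleCat.of R
            (M (n + 1) ⧸ LinearMap.range (f n (n + 1) (Nat.le_succ n)))))).obj N,
        algebraMap V R a • x = 0)
    (hker : ∀ n : ℕ, ∀ a ∈ δ n, ∀ x ∈ LinearMap.ker (f n (n + 1) (Nat.le_succ n)),
      algebraMap V R a • x = 0) :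
    IsAlmostProjective V m R (Module.DirectLimit M f) := by
  intro i hi N a ha x
  rw [← hm] at ha
  have hM : ∀ n, ∀ a ∈ ε n, FactorsProj (algebraMap V R a) (ModuleCat.of R (M n)) :=
    fun n a ha => factorsProj_of_ext fun N x => hExtM n 1 Nat.one_pos N a ha x
  have hcok : ∀ n, ∀ a ∈ δ n, FactorsProj (algebraMap V R a) (ModuleCat.of R
      (M (n + 1) ⧸ LinearMap.range (f n (n + 1) (Nat.le_succ n)))) :=
    fun n a ha => factorsProj_of_ext fun N x => hExtCoker n 1 Nat.one_pos N a ha x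
  refine Submodule.mul_induction_on ha ?_ ?_
  · intro b hb c hc
    exact ext_smul_of_factorsProj (core f hm hε hδ hM hcok hker b c hb hc) i hi N x
  · intro b c hb hc
    rw [map_add, add_smul, hb, hc, add_zero]
end
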